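/- arXiv:1301.7156 — 2 statements merged into one kernel-verified Lean document; each statement's English description precedes it below -/
import Mathlib

section
/- Let p > 2 and set σ := π^{2−p}/(p−1). Let ν be a probability measure on 𝕋 with a density (still denoted ν) with respect to λ that is a-Hölder with constant A, i.e. |ν(x)−ν(y)| ≤ A d(x,y)^a for all x,y, where a ∈ (0,1] and A > 0. Then there exists a constant C > 0, depending only on p and A, such that for every β ≥ 1 and every α ∈ (0, σ/(pβ²)) there exists a bounded measurable function h : 𝕋 → ℝ with ∫_𝕋 L_{α,β}φ dμ_β = ∫_𝕋 φ·h dμ_β for all φ ∈ C²(𝕋), and with ess sup_x |h(x)| ≤ C·max(αβ⁴, α^a β^{1+a}). -/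
open MeasureTheory Real Set Filter

noncomputable section

instance : Fact (0 < 2 * π) := ⟨Real.two_pi_pos⟩

/-- The circle `𝕋 = ℝ/(2πℤ)`. -/
abbrev 𝕋 : Type := AddCircle (2 * π)

/-- The normalized Haar probability measure `λ` on the circle. -/
def lam : Measure 𝕋 := (ENNReal.ofReal (2 * π))⁻¹ • volume

/-- The representative of a point of the circle in `(-π, π]`. -/
def rep (z : 𝕋) : ℝ := ((AddCircle.equivIoc (2 * π) (-π) z : Set.Ioc (-π) (-π + 2 * π)) : ℝ)

/-- `σ(x,y) = +1` if the representative of `y - x` lies in `[0, π]`, `-1` otherwise. -/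
def sgn (x y : 𝕋) : ℝ := if 0 ≤ rep (y - x) then 1 else -1

/-- The potential `U_p(x) = ∫ d(x,y)^p ν(dy)`. -/
def Up (p : ℝ) (ν : Measure 𝕋) (x : 𝕋) : ℝ := ∫ y, dist x y ^ p ∂ν

/-- The normalizing constant `Z_β = ∫ exp(-β U_p) dλ`. -/
def Zp (p : ℝ) (ν : Measure 𝕋) (β : ℝ) : ℝ := ∫ x, Real.exp (-β * Up p ν x) ∂lam

/-- The Gibbs measure `μ_β` with density `exp(-β U_p)/Z_β` w.r.t. `λ`. -/
def gibbsp (p : ℝ) (ν : Measure 𝕋) (β : ℝ) : Measure 𝕋 :=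
  lam.withDensity fun x => ENNReal.ofReal (Real.exp (-β * Up p ν x) / Zp p ν β)

/-- The generator, acting on (the periodic lift) `φ` of a `C²` function on `𝕋`:
`L_{α,β}φ(x) = ½ φ''(x) + α⁻¹ ∫ [φ(x + (p/2)αβ d(x,y)^{p-1} σ(x,y)) - φ(x)] ν(dy)`. -/
def genp (p : ℝ) (ν : Measure 𝕋) (α β : ℝ) (φ : ℝ → ℝ) (z : 𝕋) : ℝ :=
  (1 / 2) * deriv (deriv φ) (rep z)
    + α⁻¹ * ∫ y, (φ (rep z + p / 2 * α * β * dist z y ^ (p - 1) * sgn z y) - φ (rep z)) ∂ν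

theorem rep_coe {x : ℝ} (hx : x ∈ Ioc (-π) π) : rep (x : 𝕋) = x := by
  unfold rep
  rw [AddCircle.equivIoc_coe_of_mem]
  constructor <;> linarith [hx.1, hx.2]

theorem coe_rep (z : 𝕋) : ((rep z : ℝ) : 𝕋) = z := AddCircle.coe_equivIoc

theorem rep_mem (z : 𝕋) : rep z ∈ Ioc (-π) π := by
  have h := (AddCircle.equivIoc (2 * π) (-π) z).2
  unfold rep
  constructor <;> linarith [h.1, h.2]

theorem measurable_rep : Measurable rep :=
  measurable_subtype_coe.comp (AddCircle.measurableEquivIoc (2 * π) (-π)).measurable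

theorem integral_circle (F : 𝕋 → ℝ) : ∫ z, F z = ∫ x in (-π)..π, F (x : 𝕋) := by
  rw [← AddCircle.intervalIntegral_preimage (2 * π) (-π) F]
  congr 1; ring

theorem integral_lam (F : 𝕋 → ℝ) : ∫ z, F z ∂lam = (2 * π)⁻¹ * ∫ x in (-π)..π, F (x : 𝕋) := by
  unfold lam
  rw [integral_smul_measure, integral_circle, ENNReal.toReal_inv,
    ENNReal.toReal_ofReal Real.two_pi_pos.le, smul_eq_mul]

theorem integral_circle_shift (F : 𝕋 → ℝ) (z : 𝕋) :
    ∫ y, F y = ∫ x in (-π)..π, F (z + (x : 𝕋)) := by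
  rw [← integral_circle (fun y => F (z + y)), integral_add_left_eq_self]

theorem integral_lam_shift (F : 𝕋 → ℝ) (z : 𝕋) :
    ∫ y, F y ∂lam = (2 * π)⁻¹ * ∫ x in (-π)..π, F (z + (x : 𝕋)) := by
  rw [← integral_circle_shift, integral_circle, integral_lam]

theorem dist_add_coe (z : 𝕋) {x : ℝ} (hx : x ∈ Ioc (-π) π) : dist z (z + (x : 𝕋)) = |x| := by
  rw [dist_self_add_right, (AddCircle.norm_coe_eq_abs_iff (2 * π) Real.two_pi_pos.ne').2]
  rw [abs_of_pos Real.two_pi_pos, abs_le]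
  constructor <;> linarith [hx.1, hx.2]

theorem dist_coe_le (x y : ℝ) : dist (x : 𝕋) (y : 𝕋) ≤ |x - y| := by
  rw [dist_eq_norm, ← AddCircle.coe_sub]
  exact QuotientAddGroup.norm_mk_le_norm

theorem sgn_add_coe (z : 𝕋) {x : ℝ} (hx : x ∈ Ioc (-π) π) :
    sgn z (z + (x : 𝕋)) = if 0 ≤ x then 1 else -1 := by
  unfold sgn
  rw [add_sub_cancel_left, rep_coe hx]

theorem integral_congr_Ioc {f g : ℝ → ℝ} (h : ∀ x ∈ Ioc (-π) π, f x = g x) :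
    ∫ x in (-π)..π, f x = ∫ x in (-π)..π, g x := by
  apply intervalIntegral.integral_congr_ae
  filter_upwards with x hx
  rw [uIoc_of_le (by linarith [Real.pi_pos])] at hx
  exact h x hx

theorem integral_nu {g : 𝕋 → ℝ} (hg : Measurable g) (h0 : ∀ x, 0 ≤ g x) (F : 𝕋 → ℝ) (z : 𝕋) :
    ∫ y, F y ∂(lam.withDensity (fun y => ENNReal.ofReal (g y))) =
      (2 * π)⁻¹ * ∫ r in (-π)..π, g (z + (r : 𝕋)) * F (z + (r : 𝕋)) := by
  rw [integral_withDensity_eq_integral_toReal_smul (by fun_prop) (by simp)]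
  simp_rw [ENNReal.toReal_ofReal (h0 _), smul_eq_mul]
  rw [integral_lam_shift _ z]

/-- odd power kernel -/
def kk (p r : ℝ) : ℝ := r * |r| ^ (p - 2)

theorem kk_abs {p : ℝ} (hp : 2 < p) (r : ℝ) : |kk p r| = |r| ^ (p - 1) := by
  unfold kk
  rcases eq_or_ne r 0 with rfl | hr
  · simp; rw [Real.zero_rpow (by linarith)]
  · rw [abs_mul, abs_of_nonneg (Real.rpow_nonneg (abs_nonneg r) _)]
    nth_rewrite 1 [← Real.rpow_one |r|]
    rw [← Real.rpow_add (abs_pos.2 hr)]; congr 1; ring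

theorem kk_sgn {p : ℝ} (hp : 2 < p) (r : ℝ) :
    |r| ^ (p - 1) * (if 0 ≤ r then 1 else -1) = kk p r := by
  rw [← kk_abs hp]
  have h := Real.rpow_nonneg (abs_nonneg r) (p - 2)
  unfold kk
  split_ifs with h1
  · rw [abs_of_nonneg (mul_nonneg h1 h)]; ring
  · rw [abs_of_nonpos (mul_nonpos_of_nonpos_of_nonneg (by linarith) h)]; ring

theorem cont_abs_rpow {q : ℝ} (hq : 0 < q) : Continuous (fun r : ℝ => |r| ^ q) :=
  continuous_abs.rpow_const (fun _ => Or.inr hq.le)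

theorem kk_cont {p : ℝ} (hp : 2 < p) : Continuous (kk p) :=
  continuous_id.mul (cont_abs_rpow (by linarith))

theorem kk_deriv {p : ℝ} (hp : 2 < p) (r : ℝ) :
    HasDerivAt (kk p) ((p - 1) * |r| ^ (p - 2)) r := by
  rcases eq_or_ne r 0 with rfl | hr
  · rw [hasDerivAt_iff_tendsto_slope]
    have h1 : Tendsto (fun r : ℝ => |r| ^ (p - 2)) (nhdsWithin 0 {0}ᶜ) (nhds 0) := by
      have := (cont_abs_rpow (q := p - 2) (by linarith)).tendsto 0
      simp only [abs_zero] at this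
      rw [Real.zero_rpow (by linarith)] at this
      exact this.mono_left nhdsWithin_le_nhds
    simp only [abs_zero]
    rw [Real.zero_rpow (by linarith), mul_zero]
    refine h1.congr' ?_
    filter_upwards [self_mem_nhdsWithin] with x hx
    have : x ≠ 0 := hx
    simp [slope_def_field, kk]
    field_simp
  · have h1 := hasDerivAt_abs hr
    have h2 := h1.rpow_const (p := p - 2) (Or.inl (abs_pos.2 hr).ne')
    have h3 := (hasDerivAt_id r).mul h2
    refine h3.congr_deriv ?_
    have e : |r| ^ (p - 2) = |r| * |r| ^ (p - 2 - 1) := by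
      nth_rewrite 2 [← Real.rpow_one |r|]
      rw [← Real.rpow_add (abs_pos.2 hr)]; congr 1; ring
    rcases lt_or_gt_of_ne hr with h | h
    · simp [sign_neg h]; rw [e, abs_of_neg h]; ring
    · simp [sign_pos h]; rw [e, abs_of_pos h]; ring

theorem absp_deriv {p : ℝ} (hp : 2 < p) (r : ℝ) :
    HasDerivAt (fun r : ℝ => |r| ^ p) (p * kk p r) r := by
  refine (hasDerivAt_abs_rpow r (by linarith)).congr_deriv ?_
  unfold kk; ring

theorem conv_deriv {G K K' : ℝ → ℝ} (hG : Continuous G) {B : ℝ} (hB : ∀ x, |G x| ≤ B)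
    (hK : ∀ r, HasDerivAt K (K' r) r) (hK' : Continuous K') (x : ℝ) :
    HasDerivAt (fun x => ∫ r in (-π)..π, K r * G (x + r))
      (K π * G (x + π) - K (-π) * G (x + -π) - ∫ r in (-π)..π, K' r * G (x + r)) x := by
  set Γ : ℝ → ℝ := fun y => ∫ t in (0:ℝ)..y, G t with hΓ
  have dΓ : ∀ y, HasDerivAt Γ (G y) y := fun y =>
    intervalIntegral.integral_hasDerivAt_right (hG.intervalIntegrable _ _)
      hG.stronglyMeasurable.stronglyMeasurableAtFilter hG.continuousAt
  have cΓ : Continuous Γ := continuous_iff_continuousAt.2 fun y => (dΓ y).continuousAt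
  have dΓ' : ∀ c y, HasDerivAt (fun x => Γ (x + c)) (G (y + c)) y := fun c y =>
    (dΓ (y + c)).comp_add_const y c
  have dΓ'' : ∀ c y, HasDerivAt (fun r => Γ (c + r)) (G (c + y)) y := fun c y =>
    (dΓ (c + y)).comp_const_add c y
  have e : (fun x => ∫ r in (-π)..π, K r * G (x + r)) = fun x =>
      K π * Γ (x + π) - K (-π) * Γ (x + -π) - ∫ r in (-π)..π, K' r * Γ (x + r) := by
    funext x
    exact intervalIntegral.integral_mul_deriv_eq_deriv_mul (fun r _ => hK r)
      (fun r _ => dΓ'' x r) (hK'.intervalIntegrable _ _)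
      (Continuous.intervalIntegrable (by fun_prop) _ _)
  rw [e]
  refine (((dΓ' π x).const_mul _).sub ((dΓ' (-π) x).const_mul _)).sub ?_
  refine (intervalIntegral.hasDerivAt_integral_of_dominated_loc_of_deriv_le
    (F := fun x r => K' r * Γ (x + r)) (F' := fun x r => K' r * G (x + r))
    (bound := fun r => |K' r| * B) (Metric.ball_mem_nhds x one_pos) ?_ ?_ ?_ ?_ ?_ ?_).2
  · refine Eventually.of_forall fun x => Continuous.aestronglyMeasurable (by fun_prop)
  · exact Continuous.intervalIntegrable (by fun_prop) _ _
  · exact Continuous.aestronglyMeasurable (by fun_prop)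
  · refine Eventually.of_forall fun r _ x _ => ?_
    rw [norm_mul]
    exact mul_le_mul_of_nonneg_left (hB _) (abs_nonneg _)
  · exact Continuous.intervalIntegrable (by fun_prop) _ _
  · refine Eventually.of_forall fun r _ x _ => ?_
    exact (dΓ' r x).const_mul _

def uu (p : ℝ) (G : ℝ → ℝ) (x : ℝ) : ℝ := (2 * π)⁻¹ * ∫ r in (-π)..π, |r| ^ p * G (x + r)
def du (p : ℝ) (G : ℝ → ℝ) (x : ℝ) : ℝ := -(p * (2 * π)⁻¹) * ∫ r in (-π)..π, kk p r * G (x + r)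
def ddu (p : ℝ) (G : ℝ → ℝ) (x : ℝ) : ℝ :=
  p * (2 * π)⁻¹ * ((p - 1) * (∫ r in (-π)..π, |r| ^ (p - 2) * G (x + r)) - 2 * π ^ (p - 1) * G (x + π))

theorem per_shift {G : ℝ → ℝ} (hper : Function.Periodic G (2 * π)) (x : ℝ) :
    G (x + -π) = G (x + π) := by
  rw [← hper (x + -π)]; congr 1; ring

theorem pi_pow_one {p : ℝ} : π * π ^ (p - 2) = π ^ (p - 1) := by
  nth_rewrite 1 [← Real.rpow_one π]
  rw [← Real.rpow_add Real.pi_pos]; congr 1; ring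

theorem kk_pi {p : ℝ} : kk p π = π ^ (p - 1) := by
  unfold kk; rw [abs_of_pos Real.pi_pos, pi_pow_one]

theorem kk_neg {p : ℝ} (r : ℝ) : kk p (-r) = - kk p r := by
  unfold kk; rw [abs_neg]; ring

theorem uu_deriv {p : ℝ} (hp : 2 < p) {G : ℝ → ℝ} (hG : Continuous G)
    (hper : Function.Periodic G (2 * π)) {B : ℝ} (hB : ∀ x, |G x| ≤ B) (x : ℝ) :
    HasDerivAt (uu p G) (du p G x) x := by
  have h := (conv_deriv hG hB (absp_deriv hp) (continuous_const.mul (kk_cont hp)) x).const_mul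
    ((2 * π)⁻¹)
  refine h.congr_deriv ?_
  simp only [abs_neg, per_shift hper, mul_assoc, intervalIntegral.integral_const_mul]
  unfold du; ring

theorem du_deriv {p : ℝ} (hp : 2 < p) {G : ℝ → ℝ} (hG : Continuous G)
    (hper : Function.Periodic G (2 * π)) {B : ℝ} (hB : ∀ x, |G x| ≤ B) (x : ℝ) :
    HasDerivAt (du p G) (ddu p G x) x := by
  have h := (conv_deriv hG hB (kk_deriv hp)
    (continuous_const.mul (cont_abs_rpow (by linarith))) x).const_mul (-(p * (2 * π)⁻¹))
  refine h.congr_deriv ?_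
  simp only [kk_neg, kk_pi, per_shift hper, mul_assoc, intervalIntegral.integral_const_mul]
  unfold ddu; ring

theorem uu_cont {p : ℝ} (hp : 2 < p) {G : ℝ → ℝ} (hG : Continuous G) : Continuous (uu p G) := by
  have h0 : 0 ≤ p := by linarith
  refine continuous_const.mul
    (intervalIntegral.continuous_parametric_intervalIntegral_of_continuous' ?_ _ _)
  simp only [Function.uncurry_def]; fun_prop

theorem du_cont {p : ℝ} (hp : 2 < p) {G : ℝ → ℝ} (hG : Continuous G) : Continuous (du p G) := by
  have := kk_cont hp
  refine continuous_const.mul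
    (intervalIntegral.continuous_parametric_intervalIntegral_of_continuous' ?_ _ _)
  simp only [Function.uncurry_def]; fun_prop

theorem ddu_cont {p : ℝ} (hp : 2 < p) {G : ℝ → ℝ} (hG : Continuous G) : Continuous (ddu p G) := by
  have h0 : 0 ≤ p - 2 := by linarith
  refine continuous_const.mul ((continuous_const.mul
    (intervalIntegral.continuous_parametric_intervalIntegral_of_continuous' ?_ _ _)).sub
    (by fun_prop))
  simp only [Function.uncurry_def]; fun_prop

theorem uu_per {p : ℝ} {G : ℝ → ℝ} (hper : Function.Periodic G (2 * π)) :
    Function.Periodic (uu p G) (2 * π) := by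
  intro x; unfold uu
  simp_rw [show ∀ r, x + 2 * π + r = x + r + 2 * π by intro r; ring, hper _]

theorem abs_int_le {f : ℝ → ℝ} {M : ℝ} (h : ∀ r ∈ Ioc (-π) π, |f r| ≤ M) :
    |∫ r in (-π)..π, f r| ≤ 2 * π * M := by
  have := intervalIntegral.norm_integral_le_of_norm_le_const (a := -π) (b := π) (f := f) (C := M)
    (by rw [uIoc_of_le (by linarith [Real.pi_pos])]; exact h)
  rw [Real.norm_eq_abs, show π - -π = 2 * π by ring, abs_of_pos Real.two_pi_pos] at this
  linarith

theorem abs_le_pi {r : ℝ} (h : r ∈ Ioc (-π) π) : |r| ≤ π := abs_le.2 ⟨h.1.le, h.2⟩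

theorem du_bound {p : ℝ} (hp : 2 < p) {G : ℝ → ℝ} {B : ℝ} (hB : ∀ x, |G x| ≤ B) (x : ℝ) :
    |du p G x| ≤ p * π ^ (p - 1) * B := by
  have hB0 : 0 ≤ B := (abs_nonneg _).trans (hB 0)
  have h := abs_int_le (f := fun r => kk p r * G (x + r)) (M := π ^ (p - 1) * B) (by
    intro r hr
    rw [abs_mul, kk_abs hp]
    gcongr
    · linarith
    · exact abs_le_pi hr
    · exact hB _)
  unfold du
  have hp0 := Real.pi_pos
  rw [abs_mul, abs_neg, abs_of_pos (by positivity)]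
  calc _ ≤ p * (2 * π)⁻¹ * (2 * π * (π ^ (p - 1) * B)) := by gcongr
    _ = _ := by field_simp

theorem ddu_bound {p : ℝ} (hp : 2 < p) {G : ℝ → ℝ} {B : ℝ} (hB : ∀ x, |G x| ≤ B) (x : ℝ) :
    |ddu p G x| ≤ p * ((p - 1) * π ^ (p - 2) + π ^ (p - 1)) * B := by
  have hB0 : 0 ≤ B := (abs_nonneg _).trans (hB 0)
  have h := abs_int_le (f := fun r => |r| ^ (p - 2) * G (x + r)) (M := π ^ (p - 2) * B) (by
    intro r hr
    rw [abs_mul, abs_of_nonneg (by positivity)]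
    refine mul_le_mul (Real.rpow_le_rpow (abs_nonneg _) (abs_le_pi hr) (by linarith)) (hB _)
      (abs_nonneg _) (by positivity))
  unfold ddu
  have hp0 := Real.pi_pos
  have hp1 : 0 < p - 1 := by linarith
  rw [abs_mul, abs_of_pos (by positivity)]
  calc _ ≤ p * (2 * π)⁻¹ * ((p - 1) * (2 * π * (π ^ (p - 2) * B)) + 2 * π ^ (p - 1) * B) := by
        gcongr
        refine (abs_sub _ _).trans ?_
        rw [abs_mul, abs_of_pos hp1, abs_mul, abs_of_pos (a := 2 * π ^ (p - 1)) (by positivity)]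
        gcongr
        exact hB _
    _ = p * ((p - 1) * π ^ (p - 2) + π⁻¹ * π ^ (p - 1)) * B := by field_simp
    _ ≤ p * ((p - 1) * π ^ (p - 2) + 1 * π ^ (p - 1)) * B := by
        gcongr
        exact inv_le_one_of_one_le₀ (by linarith [Real.pi_gt_three])
    _ = _ := by ring

theorem bern {t q : ℝ} (h0 : 0 ≤ t) (h1 : t ≤ 1) (hq : 0 < q) : 1 - (1 - t) ^ q ≤ (q + 1) * t := by
  have h := one_add_mul_self_le_rpow_one_add (s := -t) (by linarith) (p := q + 1) (by linarith)
  have h2 : (1 - t) ^ (q + 1) ≤ (1 - t) ^ q :=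
    Real.rpow_le_rpow_of_exponent_ge' (by linarith) (by linarith) hq.le (by linarith)
  rw [← sub_eq_add_neg] at h
  linarith

theorem t_bounds {p s r : ℝ} (hp : 2 < p) (hs : 0 ≤ s) (hs1 : s * π ^ (p - 2) ≤ 1)
    (hr : |r| ≤ π) : 0 ≤ s * |r| ^ (p - 2) ∧ s * |r| ^ (p - 2) ≤ s * π ^ (p - 2) := by
  have := Real.rpow_nonneg (abs_nonneg r) (p - 2)
  refine ⟨by positivity, ?_⟩
  exact mul_le_mul_of_nonneg_left (Real.rpow_le_rpow (abs_nonneg _) hr (by linarith)) hs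

theorem pw_rho {p s r : ℝ} (hp : 2 < p) (hs : 0 ≤ s) (hs1 : s * π ^ (p - 2) ≤ 1)
    (hr : |r| ≤ π) :
    |r - s * kk p r| ^ (p - 2) = |r| ^ (p - 2) * (1 - s * |r| ^ (p - 2)) ^ (p - 2) := by
  obtain ⟨h0, h1⟩ := t_bounds hp hs hs1 hr
  rw [show r - s * kk p r = r * (1 - s * |r| ^ (p - 2)) by unfold kk; ring, abs_mul,
    abs_of_nonneg (a := 1 - s * |r| ^ (p - 2)) (by linarith),
    Real.mul_rpow (abs_nonneg _) (by linarith)]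

theorem rho_abs {p s r : ℝ} (hp : 2 < p) (hs : 0 ≤ s) (hs1 : s * π ^ (p - 2) ≤ 1)
    (hr : |r| ≤ π) : |r - s * kk p r| ≤ π := by
  obtain ⟨h0, h1⟩ := t_bounds hp hs hs1 hr
  rw [show r - s * kk p r = r * (1 - s * |r| ^ (p - 2)) by unfold kk; ring, abs_mul,
    abs_of_nonneg (a := 1 - s * |r| ^ (p - 2)) (by linarith)]
  nlinarith [abs_nonneg r]

theorem m1_bound {p s r : ℝ} (hp : 2 < p) (hs : 0 ≤ s) (hs1 : s * π ^ (p - 2) ≤ 1)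
    (hr : |r| ≤ π) :
    |(|r| ^ (p - 2) - |r - s * kk p r| ^ (p - 2))| ≤ (p - 1) * (π ^ (p - 2)) ^ 2 * s := by
  obtain ⟨h0, h1⟩ := t_bounds hp hs hs1 hr
  rw [pw_rho hp hs hs1 hr]
  set t := s * |r| ^ (p - 2) with ht
  have hb := bern (q := p - 2) h0 (by linarith) (by linarith)
  have h2 : (1 - t) ^ (p - 2) ≤ 1 := Real.rpow_le_one (by linarith) (by linarith) (by linarith)
  have h3 : |r| ^ (p - 2) ≤ π ^ (p - 2) := Real.rpow_le_rpow (abs_nonneg _) hr (by linarith)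
  have h4 := Real.rpow_nonneg (abs_nonneg r) (p - 2)
  rw [← mul_one_sub, abs_mul, abs_of_nonneg h4,
    abs_of_nonneg (a := 1 - (1 - t) ^ (p - 2)) (by linarith)]
  have hp1 : 0 ≤ p - 1 := by linarith
  calc _ ≤ π ^ (p - 2) * ((p - 1) * (s * π ^ (p - 2))) := by
        apply mul_le_mul h3 _ (by linarith) (by positivity)
        refine hb.trans ?_
        rw [show p - 2 + 1 = p - 1 by ring]
        gcongr
    _ = _ := by ring

theorem m2_bound {p s r : ℝ} (hp : 2 < p) (hs : 0 ≤ s) (hs1 : s * π ^ (p - 2) ≤ 1)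
    (hr : |r| ≤ π) :
    |kk p r - kk p (r - s * kk p r)| ≤ p * π * (π ^ (p - 2)) ^ 2 * s := by
  obtain ⟨h0, h1⟩ := t_bounds hp hs hs1 hr
  have e : kk p r - kk p (r - s * kk p r)
      = r * (|r| ^ (p - 2) - |r - s * kk p r| ^ (p - 2))
        + s * (r * |r| ^ (p - 2) * |r - s * kk p r| ^ (p - 2)) := by
    unfold kk; ring
  have hb := m1_bound hp hs hs1 hr
  have h3 : |r| ^ (p - 2) ≤ π ^ (p - 2) := Real.rpow_le_rpow (abs_nonneg _) hr (by linarith)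
  have h4 : |r - s * kk p r| ^ (p - 2) ≤ π ^ (p - 2) :=
    Real.rpow_le_rpow (abs_nonneg _) (rho_abs hp hs hs1 hr) (by linarith)
  have h5 := Real.rpow_nonneg (abs_nonneg r) (p - 2)
  have h6 := Real.rpow_nonneg (abs_nonneg (r - s * kk p r)) (p - 2)
  have hpi := Real.pi_pos
  rw [e]
  calc _ ≤ |r| * |(|r| ^ (p - 2) - |r - s * kk p r| ^ (p - 2))|
        + s * (|r| * |r| ^ (p - 2) * |r - s * kk p r| ^ (p - 2)) := by
        refine (abs_add_le _ _).trans ?_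
        rw [abs_mul, abs_mul s, abs_of_nonneg hs, abs_mul, abs_mul, abs_of_nonneg h5,
          abs_of_nonneg h6]
    _ ≤ π * ((p - 1) * (π ^ (p - 2)) ^ 2 * s) + s * (π * π ^ (p - 2) * π ^ (p - 2)) := by
        gcongr
    _ = _ := by ring

theorem rho_deriv {p : ℝ} (hp : 2 < p) (s r : ℝ) :
    HasDerivAt (fun r => r - s * kk p r) (1 - s * ((p - 1) * |r| ^ (p - 2))) r :=
  (hasDerivAt_id r).sub ((kk_deriv hp r).const_mul s)

theorem rho_subst {p : ℝ} (hp : 2 < p) (s : ℝ) {f : ℝ → ℝ} (hf : Continuous f) :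
    ∫ r in (-π)..π, f (r - s * kk p r) * (1 - s * ((p - 1) * |r| ^ (p - 2)))
      = ∫ r in (-π + s * π ^ (p - 1))..(π - s * π ^ (p - 1)), f r := by
  have h := intervalIntegral.integral_comp_mul_deriv (a := -π) (b := π)
    (fun r _ => rho_deriv hp s r) (by
      have h0 : 0 ≤ p - 2 := by linarith
      fun_prop) hf
  simp only [kk_neg, kk_pi, Function.comp] at h
  rw [h]; congr 1; ring

theorem split3 {f : ℝ → ℝ} (hf : Continuous f) (c : ℝ) :
    (∫ r in (-π + c)..(π - c), f r) - ∫ r in (-π)..π, f r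
      = -(∫ r in (-π)..(-π + c), f r) - ∫ r in (π - c)..π, f r := by
  have i := fun a b => hf.intervalIntegrable (μ := volume) a b
  rw [← intervalIntegral.integral_add_adjacent_intervals (i (-π) (-π + c)) (i (-π + c) π),
    ← intervalIntegral.integral_add_adjacent_intervals (i (-π + c) (π - c)) (i (π - c) π)]
  ring

theorem subst_est {p s : ℝ} (hp : 2 < p) (hs : 0 ≤ s) (hs1 : s * π ^ (p - 2) ≤ 1)
    {f m : ℝ → ℝ} (hf : Continuous f) (hm : Continuous m) {B M0 M1 : ℝ}
    (hB : ∀ x, |f x| ≤ B) (hM0 : ∀ r, |r| ≤ π → |m r| ≤ M0)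
    (hM1 : ∀ r, |r| ≤ π → |m r - m (r - s * kk p r)| ≤ M1 * s) :
    |(∫ r in (-π)..π, m r * f (r - s * kk p r)) - ∫ r in (-π)..π, m r * f r|
      ≤ (2 * π * (M1 + M0 * ((p - 1) * π ^ (p - 2))) + 2 * M0 * π ^ (p - 1)) * B * s := by
  have hB0 : 0 ≤ B := (abs_nonneg _).trans (hB 0)
  have hpi := Real.pi_pos
  have hM00 : 0 ≤ M0 := (abs_nonneg _).trans (hM0 0 (by simp [hpi.le]))
  have hk := kk_cont hp
  have h0 : 0 ≤ p - 2 := by linarith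
  have hp1 : 0 ≤ p - 1 := by linarith
  have h1 := rho_subst hp s (f := fun r => m r * f r) (by fun_prop)
  have h2 : ∫ r in (-π)..π, m r * f (r - s * kk p r)
      = (∫ r in (-π)..π, m (r - s * kk p r) * f (r - s * kk p r)
          * (1 - s * ((p - 1) * |r| ^ (p - 2))))
        + ∫ r in (-π)..π, (m r - m (r - s * kk p r)
          + m (r - s * kk p r) * (s * ((p - 1) * |r| ^ (p - 2)))) * f (r - s * kk p r) := by
    rw [← intervalIntegral.integral_add (Continuous.intervalIntegrable (by fun_prop) _ _)
      (Continuous.intervalIntegrable (by fun_prop) _ _)]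
    congr 1; funext r; ring
  have h3 := split3 (f := fun r => m r * f r) (by fun_prop) (s * π ^ (p - 1))
  have hc0 : 0 ≤ s * π ^ (p - 1) := by positivity
  have hc1 : s * π ^ (p - 1) ≤ π := by rw [← pi_pow_one]; nlinarith
  have h4 : |∫ r in (-π)..(-π + s * π ^ (p - 1)), m r * f r| ≤ M0 * B * (s * π ^ (p - 1)) := by
    have := intervalIntegral.norm_integral_le_of_norm_le_const (a := -π)
      (b := -π + s * π ^ (p - 1)) (f := fun r => m r * f r) (C := M0 * B) (by
        rw [uIoc_of_le (by linarith)]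
        intro r hr
        rw [norm_mul]
        exact mul_le_mul (hM0 _ (abs_le.2 ⟨hr.1.le, by linarith [hr.2]⟩)) (hB _)
          (abs_nonneg _) hM00)
    rwa [show -π + s * π ^ (p - 1) - -π = s * π ^ (p - 1) by ring, abs_of_nonneg hc0] at this
  have h5 : |∫ r in (π - s * π ^ (p - 1))..π, m r * f r| ≤ M0 * B * (s * π ^ (p - 1)) := by
    have := intervalIntegral.norm_integral_le_of_norm_le_const (a := π - s * π ^ (p - 1))
      (b := π) (f := fun r => m r * f r) (C := M0 * B) (by
        rw [uIoc_of_le (by linarith)]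
        intro r hr
        rw [norm_mul]
        exact mul_le_mul (hM0 _ (abs_le.2 ⟨by linarith [hr.1], hr.2⟩)) (hB _)
          (abs_nonneg _) hM00)
    rwa [show π - (π - s * π ^ (p - 1)) = s * π ^ (p - 1) by ring, abs_of_nonneg hc0] at this
  have h6 := abs_int_le (f := fun r => (m r - m (r - s * kk p r)
          + m (r - s * kk p r) * (s * ((p - 1) * |r| ^ (p - 2)))) * f (r - s * kk p r))
      (M := (M1 * s + M0 * (s * ((p - 1) * π ^ (p - 2)))) * B) (by
    intro r hr
    have hr' := abs_le_pi hr
    have h7 := hM1 r hr'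
    have h8 := hM0 _ (rho_abs hp hs hs1 hr')
    have h9 : |r| ^ (p - 2) ≤ π ^ (p - 2) := Real.rpow_le_rpow (abs_nonneg _) hr' h0
    have h10 := Real.rpow_nonneg (abs_nonneg r) (p - 2)
    rw [abs_mul]
    have h11 : |m r - m (r - s * kk p r)
          + m (r - s * kk p r) * (s * ((p - 1) * |r| ^ (p - 2)))|
          ≤ M1 * s + M0 * (s * ((p - 1) * π ^ (p - 2))) := by
      refine (abs_add_le _ _).trans (add_le_add h7 ?_)
      rw [abs_mul, abs_of_nonneg (a := s * ((p - 1) * |r| ^ (p - 2))) (by positivity)]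
      gcongr
    exact mul_le_mul h11 (hB _) (abs_nonneg _) ((abs_nonneg _).trans h11))
  rw [h2, h1]
  rw [abs_le] at h4 h5 h6 ⊢
  constructor <;> nlinarith

theorem m1_est {p s : ℝ} (hp : 2 < p) (hs : 0 ≤ s) (hs1 : s * π ^ (p - 2) ≤ 1)
    {f : ℝ → ℝ} (hf : Continuous f) {B : ℝ} (hB : ∀ x, |f x| ≤ B) :
    |(∫ r in (-π)..π, |r| ^ (p - 2) * f (r - s * kk p r)) - ∫ r in (-π)..π, |r| ^ (p - 2) * f r|
      ≤ (2 * π * ((p - 1) * (π ^ (p - 2)) ^ 2 + π ^ (p - 2) * ((p - 1) * π ^ (p - 2)))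
        + 2 * π ^ (p - 2) * π ^ (p - 1)) * B * s :=
  subst_est hp hs hs1 hf (cont_abs_rpow (by linarith)) hB
    (fun r hr => by
      rw [abs_of_nonneg (by positivity)]
      exact Real.rpow_le_rpow (abs_nonneg _) hr (by linarith))
    (fun r hr => m1_bound hp hs hs1 hr)

theorem m2_est {p s : ℝ} (hp : 2 < p) (hs : 0 ≤ s) (hs1 : s * π ^ (p - 2) ≤ 1)
    {f : ℝ → ℝ} (hf : Continuous f) {B : ℝ} (hB : ∀ x, |f x| ≤ B) :
    |(∫ r in (-π)..π, kk p r * f (r - s * kk p r)) - ∫ r in (-π)..π, kk p r * f r|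
      ≤ (2 * π * (p * π * (π ^ (p - 2)) ^ 2 + π ^ (p - 1) * ((p - 1) * π ^ (p - 2)))
        + 2 * π ^ (p - 1) * π ^ (p - 1)) * B * s :=
  subst_est hp hs hs1 hf (kk_cont hp) hB
    (fun r hr => by
      rw [kk_abs hp]
      exact Real.rpow_le_rpow (abs_nonneg _) hr (by linarith))
    (fun r hr => m2_bound hp hs hs1 hr)

theorem bdry_est {f : ℝ → ℝ} (hf : Continuous f) {A a : ℝ} (ha : 0 < a) (hA : 0 < A)
    (hH : ∀ x y, |f x - f y| ≤ A * |x - y| ^ a) {x₀ x₁ y : ℝ} (h01 : x₀ ≤ x₁)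
    (hy : y ∈ Icc x₀ x₁) :
    |(∫ r in x₀..x₁, f r) - (x₁ - x₀) * f y| ≤ A * (x₁ - x₀) ^ a * (x₁ - x₀) := by
  have h := intervalIntegral.norm_integral_le_of_norm_le_const (a := x₀) (b := x₁)
    (f := fun r => f r - f y) (C := A * (x₁ - x₀) ^ a) (by
      rw [uIoc_of_le h01]
      intro r hr
      refine (hH r y).trans ?_
      gcongr
      rw [abs_le]; constructor <;> linarith [hr.1, hr.2, hy.1, hy.2])
  rw [intervalIntegral.integral_sub (hf.intervalIntegrable _ _) (by simp),
    intervalIntegral.integral_const, smul_eq_mul, abs_of_nonneg (by linarith)] at h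
  exact h

theorem T3_est {p s : ℝ} (hp : 2 < p) (hs : 0 ≤ s) (hs1 : s * π ^ (p - 2) ≤ 1)
    {f : ℝ → ℝ} (hf : Continuous f) {B : ℝ} (hB : ∀ x, |f x| ≤ B) {A a : ℝ} (ha : 0 < a)
    (hA : 0 < A) (hH : ∀ x y, |f x - f y| ≤ A * |x - y| ^ a) (hper : f (-π) = f π) :
    |(∫ r in (-π)..π, (f (r - s * kk p r) - f r))
      - s * ((p - 1) * (∫ r in (-π)..π, |r| ^ (p - 2) * f r) - 2 * π ^ (p - 1) * f π)|
      ≤ (p - 1) * ((2 * π * ((p - 1) * (π ^ (p - 2)) ^ 2 + π ^ (p - 2) * ((p - 1) * π ^ (p - 2)))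
        + 2 * π ^ (p - 2) * π ^ (p - 1)) * B) * s ^ 2
        + 2 * (A * (s * π ^ (p - 1)) ^ a * (s * π ^ (p - 1))) := by
  have hpi := Real.pi_pos
  have hk := kk_cont hp
  have h0 : 0 ≤ p - 2 := by linarith
  have hp1 : 0 ≤ p - 1 := by linarith
  have h1 := rho_subst hp s hf
  have h2 : ∫ r in (-π)..π, f (r - s * kk p r)
      = (∫ r in (-π)..π, f (r - s * kk p r) * (1 - s * ((p - 1) * |r| ^ (p - 2))))
        + s * (p - 1) * ∫ r in (-π)..π, |r| ^ (p - 2) * f (r - s * kk p r) := by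
    rw [← intervalIntegral.integral_const_mul,
      ← intervalIntegral.integral_add (Continuous.intervalIntegrable (by fun_prop) _ _)
      (Continuous.intervalIntegrable (by fun_prop) _ _)]
    congr 1; funext r; ring
  have h3 := split3 hf (s * π ^ (p - 1))
  have hc0 : 0 ≤ s * π ^ (p - 1) := by positivity
  have h4 := bdry_est hf ha hA hH (x₀ := -π) (x₁ := -π + s * π ^ (p - 1)) (y := -π)
    (by linarith) ⟨le_rfl, by linarith⟩
  have h5 := bdry_est hf ha hA hH (x₀ := π - s * π ^ (p - 1)) (x₁ := π) (y := π)
    (by linarith) ⟨by linarith, le_rfl⟩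
  rw [show -π + s * π ^ (p - 1) - -π = s * π ^ (p - 1) by ring, hper] at h4
  rw [show π - (π - s * π ^ (p - 1)) = s * π ^ (p - 1) by ring] at h5
  have h6 := mul_le_mul_of_nonneg_left (m1_est hp hs hs1 hf hB) (mul_nonneg hs hp1)
  rw [← abs_of_nonneg (mul_nonneg hs hp1), ← abs_mul, abs_of_nonneg (mul_nonneg hs hp1)] at h6
  rw [intervalIntegral.integral_sub (Continuous.intervalIntegrable (by fun_prop) _ _)
    (hf.intervalIntegrable _ _), h2, h1]
  rw [abs_le] at h4 h5 h6 ⊢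
  constructor <;> nlinarith

theorem exp_two (t : ℝ) : |Real.exp t - 1 - t| ≤ t ^ 2 * Real.exp |t| := by
  have h := Complex.norm_exp_sub_sum_le_norm_mul_exp (t : ℂ) 2
  simp only [Finset.sum_range_succ, Finset.sum_range_zero] at h
  norm_num at h
  rw [← sub_sub] at h
  have e : Complex.exp t - 1 - t = ((Real.exp t - 1 - t : ℝ) : ℂ) := by push_cast; rfl
  rw [e, Complex.norm_real] at h
  exact h

theorem taylor2 {u u' u'' : ℝ → ℝ} (h1 : ∀ x, HasDerivAt u (u' x) x)
    (h2 : ∀ x, HasDerivAt u' (u'' x) x) {M2 : ℝ} (hM : ∀ x, |u'' x| ≤ M2) (x δ : ℝ) :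
    |u x - u (x - δ) - u' x * δ| ≤ M2 * δ ^ 2 := by
  have hM0 : 0 ≤ M2 := (abs_nonneg _).trans (hM 0)
  have l1 : ∀ y, |u' y - u' x| ≤ M2 * |y - x| := fun y =>
    Convex.norm_image_sub_le_of_norm_hasDerivWithin_le (s := univ)
      (fun z _ => (h2 z).hasDerivWithinAt) (fun z _ => hM z) convex_univ trivial trivial
  have l2 := Convex.norm_image_sub_le_of_norm_hasDerivWithin_le (s := uIcc (x - δ) x)
      (f := fun y => u y - u' x * y) (f' := fun y => u' y - u' x * 1) (C := M2 * |δ|)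
      (fun z _ => ((h1 z).sub ((hasDerivAt_id z).const_mul (u' x))).hasDerivWithinAt)
      (fun z hz => by
        rw [mul_one]
        refine (l1 z).trans ?_
        refine mul_le_mul_of_nonneg_left ?_ hM0
        have := abs_sub_right_of_mem_uIcc hz
        rw [abs_sub_comm]
        rwa [show x - (x - δ) = δ by ring] at this) (convex_uIcc _ _) left_mem_uIcc right_mem_uIcc
  rw [Real.norm_eq_abs, Real.norm_eq_abs, show x - (x - δ) = δ by ring, mul_assoc, abs_mul_abs_self]
    at l2
  rw [show u x - u (x - δ) - u' x * δ = u x - u' x * x - (u (x - δ) - u' x * (x - δ)) by ring,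
    pow_two]
  exact l2

theorem lip1 {u u' : ℝ → ℝ} (h1 : ∀ x, HasDerivAt u (u' x) x)
    {M1 : ℝ} (hM : ∀ x, |u' x| ≤ M1) (x δ : ℝ) : |u x - u (x - δ)| ≤ M1 * |δ| := by
  have := Convex.norm_image_sub_le_of_norm_hasDerivWithin_le (s := univ) (x := x - δ) (y := x)
      (fun z _ => (h1 z).hasDerivWithinAt) (fun z _ => hM z) convex_univ trivial trivial
  rwa [show x - (x - δ) = δ by ring] at this

theorem E_est {u u' u'' : ℝ → ℝ} (h1 : ∀ x, HasDerivAt u (u' x) x)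
    (h2 : ∀ x, HasDerivAt u' (u'' x) x) {M1 M2 T β : ℝ} (hM1 : ∀ x, |u' x| ≤ M1)
    (hM : ∀ x, |u'' x| ≤ M2) (hβ : 1 ≤ β) (x δ : ℝ) (hT : β * (M1 * |δ|) ≤ T) :
    |Real.exp (β * (u x - u (x - δ))) - 1 - β * u' x * δ|
      ≤ β ^ 2 * δ ^ 2 * (M1 ^ 2 * Real.exp T + M2) := by
  have hM0 : 0 ≤ M2 := (abs_nonneg _).trans (hM 0)
  have hM10 : 0 ≤ M1 := (abs_nonneg _).trans (hM1 0)
  have a1 := exp_two (β * (u x - u (x - δ)))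
  have a2 := taylor2 h1 h2 hM x δ
  have a3 := lip1 h1 hM1 x δ
  have a4 : |β * (u x - u (x - δ))| ≤ β * (M1 * |δ|) := by
    rw [abs_mul, abs_of_pos (by linarith)]; gcongr
  have a5 : (β * (u x - u (x - δ))) ^ 2 ≤ (β * (M1 * |δ|)) ^ 2 := by
    rw [← sq_abs]; gcongr
  have a6 : (β * (u x - u (x - δ))) ^ 2 * Real.exp |β * (u x - u (x - δ))|
      ≤ (β * (M1 * |δ|)) ^ 2 * Real.exp T := by
    gcongr; exact a4.trans hT
  have a7 : |β * (u x - u (x - δ) - u' x * δ)| ≤ β * (M2 * δ ^ 2) := by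
    rw [abs_mul, abs_of_pos (by linarith)]; gcongr
  have a8 : β * (M2 * δ ^ 2) ≤ β ^ 2 * (M2 * δ ^ 2) := by
    gcongr; nlinarith
  have e : Real.exp (β * (u x - u (x - δ))) - 1 - β * u' x * δ
    = (Real.exp (β * (u x - u (x - δ))) - 1 - β * (u x - u (x - δ)))
      + β * (u x - u (x - δ) - u' x * δ) := by ring
  rw [e]
  refine (abs_add_le _ _).trans ?_
  have e2 : (β * (M1 * |δ|)) ^ 2 = β ^ 2 * M1 ^ 2 * δ ^ 2 := by
    rw [mul_pow, mul_pow, sq_abs]; ring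
  rw [e2] at a6
  nlinarith

def HH (p : ℝ) (G : ℝ → ℝ) (α β : ℝ) (x : ℝ) : ℝ :=
  1 / 2 * (β ^ 2 * du p G x ^ 2 - β * ddu p G x)
    + α⁻¹ * ((2 * π)⁻¹ * ∫ r in (-π)..π, (G (x + (r - p / 2 * α * β * kk p r))
        * Real.exp (β * (uu p G x - uu p G (x - p / 2 * α * β * kk p r))) - G (x + r)))

theorem alg1 {α β p d dd J2 J3 q : ℝ} (hα : 0 < α) (hd : d = -(p * q) * J2)
    (hdd : dd = p * q * J3) :
    1 / 2 * (β ^ 2 * d ^ 2 - β * dd)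
        = -(α⁻¹ * q * (β * d * (p / 2 * α * β) * J2 + (p / 2 * α * β) * J3)) := by
  rw [show d ^ 2 = d * (-(p * q) * J2) by rw [pow_two, ← hd], hdd]
  field_simp; ring

set_option maxHeartbeats 2000000 in
theorem HH_bound {p : ℝ} (hp : 2 < p) {A B : ℝ} (hA : 0 < A) (hB0 : 0 < B) :
    ∃ C : ℝ, 0 < C ∧ ∀ (a : ℝ), 0 < a → a ≤ 1 → ∀ G : ℝ → ℝ, Continuous G →
      Function.Periodic G (2 * π) → (∀ x, |G x| ≤ B) → (∀ x y, |G x - G y| ≤ A * |x - y| ^ a) →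
      ∀ β α : ℝ, 1 ≤ β → 0 < α → β * (p / 2 * α * β) * π ^ (p - 2) ≤ 1 →
      ∀ x, |HH p G α β x| ≤ C * max (α * β ^ 4) (α ^ a * β ^ (1 + a)) := by
  have hpi := Real.pi_pos
  have hp1 : 0 < p - 1 := by linarith
  have hp0 : 0 < p := by linarith
  set P := π ^ (p - 1) with hP
  have hP0 : 0 < P := by positivity
  set M1 := p * P * B with hM1
  set M2 := p * ((p - 1) * π ^ (p - 2) + P) * B with hM2
  set D2 := (2 * π * (p * π * (π ^ (p - 2)) ^ 2 + P * ((p - 1) * π ^ (p - 2))) + 2 * P * P) * B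
    with hD2
  set D3 := (p - 1) * ((2 * π * ((p - 1) * (π ^ (p - 2)) ^ 2 + π ^ (p - 2) * ((p - 1) * π ^ (p - 2)))
        + 2 * π ^ (p - 2) * P) * B) with hD3
  set CE := M1 ^ 2 * Real.exp (M1 * π) + M2 with hCE
  have hM10 : 0 < M1 := by positivity
  have hM20 : 0 < M2 := by positivity
  have hD20 : 0 < D2 := by positivity
  have hD30 : 0 < D3 := by positivity
  have hCE0 : 0 < CE := by positivity
  set D := 2 * π * (B * (P ^ 2 * CE)) + M1 * D2 + D3 with hD
  have hD0 : 0 < D := by positivity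
  set K := p / 2 * P with hK
  have hK0 : 0 < K := by positivity
  have hP1 : 1 ≤ P := Real.one_le_rpow (by linarith [Real.pi_gt_three]) hp1.le
  have hK1 : 1 ≤ K := by rw [hK]; nlinarith
  refine ⟨D * (p ^ 2 / 4) + 2 * A * K ^ 2, by positivity, ?_⟩
  intro a ha ha1 G hG hper hB hH β α hβ hα hsmall x
  have hβ0 : 0 < β := by linarith
  set s := p / 2 * α * β with hs
  have hs0 : 0 < s := by positivity
  have hs1 : s * π ^ (p - 2) ≤ 1 := by
    refine le_trans ?_ hsmall
    rw [mul_assoc β s]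
    exact le_mul_of_one_le_left (by positivity) hβ
  have hk := kk_cont hp
  have hu := uu_cont hp hG
  have d1 := uu_deriv hp hG hper hB
  have d2 := du_deriv hp hG hper hB
  have b1 := du_bound hp hB
  have b2 := ddu_bound hp hB
  have hf : Continuous (fun r => G (x + r)) := by fun_prop
  have hfB : ∀ r, |G (x + r)| ≤ B := fun r => hB _
  have e2 := m2_est hp hs0.le hs1 hf hfB
  have e3 := T3_est hp hs0.le hs1 hf hfB ha hA (fun y z => by
    have := hH (x + y) (x + z)
    rwa [add_sub_add_left_eq_sub] at this) (per_shift hper x)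
  rw [← hP, ← hD2] at e2
  rw [← hP, ← hD3] at e3
  set E : ℝ → ℝ := fun r => Real.exp (β * (uu p G x - uu p G (x - s * kk p r))) - 1
    - β * du p G x * (s * kk p r) with hE
  have cE : Continuous E := by fun_prop
  have e1 := abs_int_le (f := fun r => G (x + (r - s * kk p r)) * E r)
    (M := B * (β ^ 2 * s ^ 2 * (P ^ 2 * CE))) (by
      intro r hr
      have hr' := abs_le_pi hr
      have hkr : |kk p r| ≤ P := by
        rw [kk_abs hp]; exact Real.rpow_le_rpow (abs_nonneg _) hr' hp1.le
      have hd : |s * kk p r| ≤ s * P := by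
        rw [abs_mul, abs_of_pos hs0]; gcongr
      have hT : β * (M1 * |s * kk p r|) ≤ M1 * π := by
        calc β * (M1 * |s * kk p r|) ≤ β * (M1 * (s * P)) := by gcongr
          _ = M1 * (π * (β * s * π ^ (p - 2))) := by rw [hP, ← pi_pow_one]; ring
          _ ≤ M1 * (π * 1) := by gcongr
          _ = _ := by ring
      have := E_est d1 d2 b1 b2 hβ x (s * kk p r) hT
      rw [abs_mul]
      refine mul_le_mul (hB _) (this.trans ?_) (abs_nonneg _) hB0.le
      rw [← sq_abs (s * kk p r)]
      calc _ ≤ β ^ 2 * (s * P) ^ 2 * CE := by gcongr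
        _ = _ := by ring)
  set I1 := ∫ r in (-π)..π, G (x + (r - s * kk p r)) * E r with hI1
  set I2 := ∫ r in (-π)..π, kk p r * G (x + (r - s * kk p r)) with hI2
  set I3 := ∫ r in (-π)..π, (G (x + (r - s * kk p r)) - G (x + r)) with hI3
  have eI : ∫ r in (-π)..π, (G (x + (r - s * kk p r))
        * Real.exp (β * (uu p G x - uu p G (x - s * kk p r))) - G (x + r))
      = I1 + β * du p G x * s * I2 + I3 := by
    rw [hI1, hI2, hI3, ← intervalIntegral.integral_const_mul,
      ← intervalIntegral.integral_add (Continuous.intervalIntegrable (by fun_prop) _ _)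
      (Continuous.intervalIntegrable (by fun_prop) _ _),
      ← intervalIntegral.integral_add (Continuous.intervalIntegrable (by fun_prop) _ _)
      (Continuous.intervalIntegrable (by fun_prop) _ _)]
    congr 1; funext r; simp only [hE]; ring
  have hdu : du p G x = -(p * (2 * π)⁻¹) * ∫ r in (-π)..π, kk p r * G (x + r) := rfl
  have hddu : ddu p G x = p * (2 * π)⁻¹ * ((p - 1) * (∫ r in (-π)..π, |r| ^ (p - 2) * G (x + r))
    - 2 * P * G (x + π)) := rfl
  set J2 := ∫ r in (-π)..π, kk p r * G (x + r) with hJ2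
  set J3 := (p - 1) * (∫ r in (-π)..π, |r| ^ (p - 2) * G (x + r)) - 2 * P * G (x + π) with hJ3
  have key : HH p G α β x
      = α⁻¹ * (2 * π)⁻¹ * (I1 + β * du p G x * s * (I2 - J2) + (I3 - s * J3)) := by
    unfold HH
    rw [← hs, eI]
    have f1 : 1 / 2 * (β ^ 2 * du p G x ^ 2 - β * ddu p G x)
        = -(α⁻¹ * (2 * π)⁻¹ * (β * du p G x * s * J2 + s * J3)) := by
      exact alg1 hα hdu hddu
    rw [f1]; ring
  have hb2 : |β * du p G x * s * (I2 - J2)| ≤ β ^ 2 * s ^ 2 * (M1 * D2) := by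
    rw [abs_mul, abs_mul, abs_mul, abs_of_pos hβ0, abs_of_pos hs0]
    calc _ ≤ β * M1 * s * (D2 * s) := by gcongr; exact b1 x
      _ = β * (s ^ 2 * (M1 * D2)) := by ring
      _ ≤ β ^ 2 * (s ^ 2 * (M1 * D2)) :=
        mul_le_mul_of_nonneg_right (le_self_pow₀ hβ two_ne_zero) (by positivity)
      _ = _ := by ring
  have hb3 : |I3 - s * J3| ≤ β ^ 2 * s ^ 2 * D3 + 2 * (A * (s * P) ^ a * (s * P)) := by
    refine e3.trans (add_le_add ?_ le_rfl)
    have h1 : s ^ 2 ≤ β ^ 2 * s ^ 2 := le_mul_of_one_le_left (by positivity) (one_le_pow₀ hβ)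
    rw [mul_comm]
    exact mul_le_mul_of_nonneg_right h1 hD30.le
  have hsP : (s * P) ^ a * (s * P) ≤ K ^ 2 * (α * (α ^ a * β ^ (1 + a))) := by
    have : s * P = K * (α * β) := by rw [hs, hK]; ring
    rw [this, Real.mul_rpow hK0.le (by positivity), Real.mul_rpow hα.le hβ0.le,
      Real.rpow_add hβ0, Real.rpow_one]
    have hKa : K ^ a ≤ K := by
      calc K ^ a ≤ K ^ (1:ℝ) := Real.rpow_le_rpow_of_exponent_le hK1 ha1
        _ = K := Real.rpow_one K
    calc _ ≤ K * (α ^ a * β ^ a) * (K * (α * β)) := by gcongr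
      _ = _ := by ring
  have hsum : |I1 + β * du p G x * s * (I2 - J2) + (I3 - s * J3)|
      ≤ α * (D * (p ^ 2 / 4) * (α * β ^ 4) + 2 * A * K ^ 2 * (α ^ a * β ^ (1 + a))) := by
    refine (abs_add_le _ _).trans ?_
    have := abs_add_le I1 (β * du p G x * s * (I2 - J2))
    have e5 : β ^ 2 * s ^ 2 = p ^ 2 / 4 * (α * (α * β ^ 4)) := by rw [hs]; ring
    have e6 := mul_le_mul_of_nonneg_left hsP hA.le
    calc _ ≤ β ^ 2 * s ^ 2 * D + 2 * (A * ((s * P) ^ a * (s * P))) := by rw [hD]; linarith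
      _ ≤ β ^ 2 * s ^ 2 * D + 2 * (A * (K ^ 2 * (α * (α ^ a * β ^ (1 + a))))) := by linarith
      _ = _ := by rw [e5]; ring
  rw [key, abs_mul, abs_of_pos (by positivity)]
  have hpi1 : (2 * π)⁻¹ ≤ 1 := inv_le_one_of_one_le₀ (by linarith [Real.pi_gt_three])
  calc _ ≤ α⁻¹ * 1 * (α * (D * (p ^ 2 / 4) * (α * β ^ 4) + 2 * A * K ^ 2 * (α ^ a * β ^ (1 + a)))) := by
        gcongr
    _ = D * (p ^ 2 / 4) * (α * β ^ 4) + 2 * A * K ^ 2 * (α ^ a * β ^ (1 + a)) := by field_simp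
    _ ≤ D * (p ^ 2 / 4) * max (α * β ^ 4) (α ^ a * β ^ (1 + a))
        + 2 * A * K ^ 2 * max (α * β ^ 4) (α ^ a * β ^ (1 + a)) := by
        gcongr
        · exact le_max_left _ _
        · exact le_max_right _ _
    _ = _ := by ring

theorem swap_cont {F : ℝ → ℝ → ℝ} (hF : Continuous F.uncurry) :
    ∫ x in (-π)..π, ∫ r in (-π)..π, F x r = ∫ r in (-π)..π, ∫ x in (-π)..π, F x r := by
  apply intervalIntegral_intervalIntegral_swap
  refine (hF.continuousOn.integrableOn_compact
    ((isCompact_uIcc (a := -π) (b := π)).prod (isCompact_uIcc (a := -π) (b := π)))).mono_set ?_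
  exact Set.prod_mono uIoc_subset_uIcc uIoc_subset_uIcc

theorem shift_per {F : ℝ → ℝ} (hF : Function.Periodic F (2 * π)) (c : ℝ) :
    ∫ x in (-π)..π, F x = ∫ x in (-π)..π, F (x - c) := by
  rw [intervalIntegral.integral_comp_sub_right]
  have := hF.intervalIntegral_add_eq (-π) (-π - c)
  rw [show -π + 2 * π = π by ring, show -π - c + 2 * π = π - c by ring] at this
  exact this

theorem per_deriv {f : ℝ → ℝ} {c : ℝ} (hf : Function.Periodic f c) :
    Function.Periodic (deriv f) c := by
  intro x
  rw [← deriv_comp_add_const]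
  congr 1; funext y; exact hf y

theorem per_pi {f : ℝ → ℝ} (hf : Function.Periodic f (2 * π)) : f (-π) = f π := by
  rw [← hf (-π)]; congr 1; ring

theorem du_per {p : ℝ} {G : ℝ → ℝ} (hper : Function.Periodic G (2 * π)) :
    Function.Periodic (du p G) (2 * π) := by
  intro x; unfold du
  simp_rw [show ∀ r, x + 2 * π + r = x + r + 2 * π by intro r; ring, hper _]

theorem ident_A {p : ℝ} (hp : 2 < p) {G : ℝ → ℝ} (hG : Continuous G)
    (hper : Function.Periodic G (2 * π)) {B : ℝ} (hB : ∀ x, |G x| ≤ B) (β : ℝ) {φ : ℝ → ℝ}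
    (hφ : Function.Periodic φ (2 * π)) (hφ2 : ContDiff ℝ 2 φ) :
    ∫ x in (-π)..π, Real.exp (-β * uu p G x) * deriv (deriv φ) x =
      ∫ x in (-π)..π, (β ^ 2 * du p G x ^ 2 - β * ddu p G x) * Real.exp (-β * uu p G x) * φ x := by
  have c0 := uu_cont hp hG
  have c1 := du_cont hp hG
  have c2 := ddu_cont hp hG
  have hφ1 : ContDiff ℝ 1 (deriv φ) := hφ2.deriv'
  have cφ2 : Continuous (deriv (deriv φ)) := hφ1.continuous_deriv le_rfl
  have dφ1 : ∀ x, HasDerivAt (deriv φ) (deriv (deriv φ) x) x := fun x =>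
    (hφ1.differentiable one_ne_zero x).hasDerivAt
  have dφ : ∀ x, HasDerivAt φ (deriv φ x) x := fun x =>
    (hφ2.differentiable two_ne_zero x).hasDerivAt
  have cφ1 := hφ1.continuous
  have dw : ∀ x, HasDerivAt (fun x => Real.exp (-β * uu p G x))
      (-β * du p G x * Real.exp (-β * uu p G x)) x := fun x =>
    (((uu_deriv hp hG hper hB x).const_mul (-β)).exp).congr_deriv (by ring)
  have dw2 : ∀ x, HasDerivAt (fun x => -β * du p G x * Real.exp (-β * uu p G x))
      ((β ^ 2 * du p G x ^ 2 - β * ddu p G x) * Real.exp (-β * uu p G x)) x := fun x =>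
    (((du_deriv hp hG hper hB x).const_mul (-β)).mul (dw x)).congr_deriv (by ring)
  rw [intervalIntegral.integral_mul_deriv_eq_deriv_mul (fun x _ => dw x) (fun x _ => dφ1 x)
    (Continuous.intervalIntegrable (by fun_prop) _ _) (cφ2.intervalIntegrable _ _),
    intervalIntegral.integral_mul_deriv_eq_deriv_mul (fun x _ => dw2 x) (fun x _ => dφ x)
    (Continuous.intervalIntegrable (by fun_prop) _ _) (cφ1.intervalIntegrable _ _),
    per_pi (uu_per hper), per_pi (du_per hper), per_pi hφ, per_pi (per_deriv hφ)]
  ring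

theorem HH_cont {p : ℝ} (hp : 2 < p) {G : ℝ → ℝ} (hG : Continuous G) (α β : ℝ) :
    Continuous (HH p G α β) := by
  have c0 := uu_cont hp hG
  have c1 := du_cont hp hG
  have c2 := ddu_cont hp hG
  have hk := kk_cont hp
  unfold HH
  refine Continuous.add (by fun_prop) (continuous_const.mul (continuous_const.mul
    (intervalIntegral.continuous_parametric_intervalIntegral_of_continuous' ?_ _ _)))
  simp only [Function.uncurry_def]; fun_prop

theorem ident_B {p : ℝ} (hp : 2 < p) {G : ℝ → ℝ} (hG : Continuous G)
    (hper : Function.Periodic G (2 * π)) (β s : ℝ) {φ : ℝ → ℝ}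
    (hφ : Function.Periodic φ (2 * π)) (cφ : Continuous φ) :
    ∫ x in (-π)..π, Real.exp (-β * uu p G x) *
        (∫ r in (-π)..π, G (x + r) * (φ (x + s * kk p r) - φ x)) =
      ∫ x in (-π)..π, Real.exp (-β * uu p G x) * (φ x *
        ∫ r in (-π)..π, (G (x + (r - s * kk p r))
        * Real.exp (β * (uu p G x - uu p G (x - s * kk p r))) - G (x + r))) := by
  have c0 := uu_cont hp hG
  have hk := kk_cont hp
  simp_rw [← intervalIntegral.integral_const_mul]
  refine (swap_cont (by simp only [Function.uncurry_def]; fun_prop)).trans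
    (Eq.trans ?_ (swap_cont (by simp only [Function.uncurry_def]; fun_prop)).symm)
  congr 1; funext r
  generalize hc : s * kk p r = c
  show ∫ x in (-π)..π, Real.exp (-β * uu p G x) * (G (x + r) * (φ (x + c) - φ x)) =
    ∫ x in (-π)..π, Real.exp (-β * uu p G x) * (φ x * (G (x + (r - c))
        * Real.exp (β * (uu p G x - uu p G (x - c))) - G (x + r)))
  have h1 : ∫ x in (-π)..π, Real.exp (-β * uu p G x) * (G (x + r) * φ (x + c)) =
      ∫ x in (-π)..π, Real.exp (-β * uu p G x) * (φ x *
        (G (x + (r - c)) * Real.exp (β * (uu p G x - uu p G (x - c))))) := by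
    rw [shift_per (F := fun x => Real.exp (-β * uu p G x) * (G (x + r) * φ (x + c))) ?_ c]
    · congr 1; funext x
      rw [show x - c + c = x by ring, show x - c + r = x + (r - c) by ring,
        show Real.exp (-β * uu p G (x - c)) = Real.exp (-β * uu p G x) *
          Real.exp (β * (uu p G x - uu p G (x - c))) by rw [← Real.exp_add]; congr 1; ring]
      ring
    · intro x
      simp only
      rw [uu_per hper, show x + 2 * π + r = x + r + 2 * π by ring, hper,
        show x + 2 * π + c = x + c + 2 * π by ring, hφ]
  have h2 : ∀ x, Real.exp (-β * uu p G x) * (G (x + r) * (φ (x + c) - φ x))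
      = Real.exp (-β * uu p G x) * (G (x + r) * φ (x + c))
        - Real.exp (-β * uu p G x) * (G (x + r) * φ x) := fun x => by ring
  have h3 : ∀ x, Real.exp (-β * uu p G x) * (φ x * (G (x + (r - c))
        * Real.exp (β * (uu p G x - uu p G (x - c))) - G (x + r)))
      = Real.exp (-β * uu p G x) * (φ x *
        (G (x + (r - c)) * Real.exp (β * (uu p G x - uu p G (x - c)))))
        - Real.exp (-β * uu p G x) * (G (x + r) * φ x) := fun x => by ring
  simp_rw [h2, h3]
  rw [intervalIntegral.integral_sub (Continuous.intervalIntegrable (by fun_prop) _ _)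
      (Continuous.intervalIntegrable (by fun_prop) _ _),
    intervalIntegral.integral_sub (Continuous.intervalIntegrable (by fun_prop) _ _)
      (Continuous.intervalIntegrable (by fun_prop) _ _), h1]

theorem ident {p : ℝ} (hp : 2 < p) {G : ℝ → ℝ} (hG : Continuous G)
    (hper : Function.Periodic G (2 * π)) {B : ℝ} (hB : ∀ x, |G x| ≤ B) (α β : ℝ) {φ : ℝ → ℝ}
    (hφ : Function.Periodic φ (2 * π)) (hφ2 : ContDiff ℝ 2 φ) :
    ∫ x in (-π)..π, Real.exp (-β * uu p G x) * (1 / 2 * deriv (deriv φ) x + α⁻¹ * ((2 * π)⁻¹ *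
        ∫ r in (-π)..π, G (x + r) * (φ (x + p / 2 * α * β * kk p r) - φ x))) =
      ∫ x in (-π)..π, Real.exp (-β * uu p G x) * (φ x * HH p G α β x) := by
  have cφ := hφ2.continuous
  have c0 := uu_cont hp hG
  have c1 := du_cont hp hG
  have c2 := ddu_cont hp hG
  have hk := kk_cont hp
  have cφ2 : Continuous (deriv (deriv φ)) :=
    ContDiff.continuous_deriv (n := 1) hφ2.deriv' le_rfl
  have hA := ident_A hp hG hper hB β hφ hφ2
  have hB' := ident_B hp hG hper β (p / 2 * α * β) hφ cφ
  have cI1 : Continuous fun x => ∫ r in (-π)..π, G (x + r) * (φ (x + p / 2 * α * β * kk p r) - φ x) :=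
    intervalIntegral.continuous_parametric_intervalIntegral_of_continuous'
      (by simp only [Function.uncurry_def]; fun_prop) _ _
  have cI2 : Continuous fun x => ∫ r in (-π)..π, (G (x + (r - p / 2 * α * β * kk p r))
        * Real.exp (β * (uu p G x - uu p G (x - p / 2 * α * β * kk p r))) - G (x + r)) :=
    intervalIntegral.continuous_parametric_intervalIntegral_of_continuous'
      (by simp only [Function.uncurry_def]; fun_prop) _ _
  have L1 : ∀ I : ℝ → ℝ, Continuous I → ∫ x in (-π)..π, Real.exp (-β * uu p G x) *
      (1 / 2 * deriv (deriv φ) x + α⁻¹ * ((2 * π)⁻¹ * I x))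
      = 1 / 2 * (∫ x in (-π)..π, Real.exp (-β * uu p G x) * deriv (deriv φ) x)
        + α⁻¹ * (2 * π)⁻¹ * (∫ x in (-π)..π, Real.exp (-β * uu p G x) * I x) := by
    intro I hI
    rw [← intervalIntegral.integral_const_mul, ← intervalIntegral.integral_const_mul,
      ← intervalIntegral.integral_add (Continuous.intervalIntegrable (by fun_prop) _ _)
      (Continuous.intervalIntegrable (by fun_prop) _ _)]
    congr 1; funext x; ring
  have L2 : ∀ I : ℝ → ℝ, Continuous I → ∫ x in (-π)..π, Real.exp (-β * uu p G x) * (φ x *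
      (1 / 2 * (β ^ 2 * du p G x ^ 2 - β * ddu p G x) + α⁻¹ * ((2 * π)⁻¹ * I x)))
      = 1 / 2 * (∫ x in (-π)..π, (β ^ 2 * du p G x ^ 2 - β * ddu p G x) *
          Real.exp (-β * uu p G x) * φ x)
        + α⁻¹ * (2 * π)⁻¹ * (∫ x in (-π)..π, Real.exp (-β * uu p G x) * (φ x * I x)) := by
    intro I hI
    rw [← intervalIntegral.integral_const_mul, ← intervalIntegral.integral_const_mul,
      ← intervalIntegral.integral_add (Continuous.intervalIntegrable (by fun_prop) _ _)
      (Continuous.intervalIntegrable (by fun_prop) _ _)]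
    congr 1; funext x; ring
  unfold HH
  refine (L1 _ cI1).trans (Eq.trans ?_ (L2 _ cI2).symm)
  rw [hA, hB']

theorem holder_cont {g : 𝕋 → ℝ} {A a : ℝ} (ha : 0 < a)
    (hH : ∀ x y : 𝕋, |g x - g y| ≤ A * dist x y ^ a) : Continuous g := by
  rw [continuous_iff_continuousAt]
  intro x
  rw [ContinuousAt, tendsto_iff_dist_tendsto_zero]
  refine squeeze_zero (fun _ => dist_nonneg) (fun y => hH y x) ?_
  have : Continuous fun y : 𝕋 => A * dist y x ^ a :=
    continuous_const.mul ((continuous_id.dist continuous_const).rpow_const (fun _ => Or.inr ha.le))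
  have h := this.tendsto x
  rwa [dist_self, Real.zero_rpow ha.ne', mul_zero] at h

theorem g_bound {g : 𝕋 → ℝ} {A a : ℝ} (ha : 0 < a) (ha1 : a ≤ 1) (hA : 0 < A)
    (h0 : ∀ x, 0 ≤ g x) (hH : ∀ x y : 𝕋, |g x - g y| ≤ A * dist x y ^ a)
    (hν : IsProbabilityMeasure (lam.withDensity (fun y => ENNReal.ofReal (g y)))) (z : 𝕋) :
    |g z| ≤ 1 + A * π := by
  have hc := holder_cont ha hH
  have hpi := Real.pi_pos
  have h1 := integral_nu hc.measurable h0 (fun _ => 1) z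
  simp only [integral_const, probReal_univ, smul_eq_mul, mul_one] at h1
  have hcg : Continuous fun r : ℝ => g (z + (r : 𝕋)) :=
    hc.comp (continuous_const.add (AddCircle.continuous_mk' (2 * π)))
  have h2 : ∫ r in (-π)..π, (g z - A * π) ≤ ∫ r in (-π)..π, g (z + (r : 𝕋)) := by
    refine intervalIntegral.integral_mono_on_of_le_Ioo (by linarith) (by simp)
      (hcg.intervalIntegrable _ _) ?_
    intro r hr
    have h3 := hH z (z + (r : 𝕋))
    rw [dist_add_coe z ⟨hr.1, hr.2.le⟩] at h3
    have h4 : |r| ^ a ≤ π := by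
      calc |r| ^ a ≤ π ^ a := Real.rpow_le_rpow (abs_nonneg _) (abs_le_pi ⟨hr.1, hr.2.le⟩) ha.le
        _ ≤ π ^ (1:ℝ) := Real.rpow_le_rpow_of_exponent_le (by linarith [Real.pi_gt_three]) ha1
        _ = π := Real.rpow_one _
    have h5 := mul_le_mul_of_nonneg_left h4 hA.le
    linarith [(abs_le.1 h3).2]
  rw [intervalIntegral.integral_const, smul_eq_mul] at h2
  have h6 : ∫ r in (-π)..π, g (z + (r : 𝕋)) = 2 * π := by
    field_simp at h1; linarith
  rw [h6] at h2
  rw [abs_of_nonneg (h0 z)]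
  nlinarith

theorem adjoint_one_estimate_p_gt_two
    (p : ℝ) (hp : 2 < p) (A : ℝ) (hA : 0 < A) :
    ∃ C : ℝ, 0 < C ∧
      ∀ (a : ℝ), 0 < a → a ≤ 1 →
      ∀ (g : 𝕋 → ℝ) (ν : Measure 𝕋), IsProbabilityMeasure ν →
        ν = lam.withDensity (fun y => ENNReal.ofReal (g y)) →
        (∀ x, 0 ≤ g x) →
        (∀ x y : 𝕋, |g x - g y| ≤ A * dist x y ^ a) →
      ∀ (β α : ℝ), 1 ≤ β → 0 < α → α < (π ^ (2 - p) / (p - 1)) / (p * β ^ 2) →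
      ∃ h : 𝕋 → ℝ, Measurable h ∧
        (∀ᵐ x ∂lam, |h x| ≤ C * max (α * β ^ 4) (α ^ a * β ^ (1 + a))) ∧
        ∀ φ : ℝ → ℝ, Function.Periodic φ (2 * π) → ContDiff ℝ 2 φ →
          ∫ z, genp p ν α β φ z ∂(gibbsp p ν β) = ∫ z, φ (rep z) * h z ∂(gibbsp p ν β) := by
  have hpi := Real.pi_pos
  obtain ⟨C, hC, hb⟩ := HH_bound hp hA (B := 1 + A * π) (by positivity)
  refine ⟨C, hC, ?_⟩
  intro a ha ha1 g ν hν hνg h0 hH β α hβ hα hαs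
  subst hνg
  have hp0 : 0 < p := by linarith
  have hp1 : 0 < p - 1 := by linarith
  have hβ0 : 0 < β := by linarith
  have hgc := holder_cont ha hH
  have hgB := g_bound ha ha1 hA h0 hH hν
  set ν := lam.withDensity (fun y => ENNReal.ofReal (g y)) with hνdef
  set G : ℝ → ℝ := fun t => g (t : 𝕋) with hGdef
  have hG : Continuous G := hgc.comp (AddCircle.continuous_mk' (2 * π))
  have hper : Function.Periodic G (2 * π) := by
    intro x; simp only [hGdef]; rw [AddCircle.coe_add_period]
  have hGB : ∀ x, |G x| ≤ 1 + A * π := fun x => hgB _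
  have hGH : ∀ x y, |G x - G y| ≤ A * |x - y| ^ a := by
    intro x y
    refine (hH _ _).trans ?_
    gcongr
    exact dist_coe_le x y
  have hsmall : β * (p / 2 * α * β) * π ^ (p - 2) ≤ 1 := by
    rw [lt_div_iff₀ (by positivity), lt_div_iff₀ hp1] at hαs
    have h1 : π ^ (2 - p) * π ^ (p - 2) = 1 := by
      rw [← Real.rpow_add hpi]; simp
    have h2 : 0 < π ^ (p - 2) := by positivity
    have h3 := mul_lt_mul_of_pos_right hαs h2
    rw [h1] at h3
    have h4 : 0 < α * (p * β ^ 2) * π ^ (p - 2) := by positivity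
    nlinarith
  have hU : ∀ z, Up p ν z = uu p G (rep z) := by
    intro z
    unfold Up uu
    rw [hνdef, integral_nu hgc.measurable h0 _ z]
    congr 1
    apply integral_congr_Ioc
    intro r hr
    rw [dist_add_coe z hr]
    simp only [hGdef]
    rw [AddCircle.coe_add, coe_rep]; ring
  have hZ : 0 ≤ Zp p ν β := integral_nonneg fun _ => (Real.exp_pos _).le
  have hmeas : Measurable fun z => Real.exp (-β * Up p ν z) / Zp p ν β := by
    simp_rw [hU]
    have := (uu_cont hp hG).measurable.comp measurable_rep
    simp only [Function.comp_def] at this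
    fun_prop
  have hgibbs : ∀ F : 𝕋 → ℝ, ∫ z, F z ∂(gibbsp p ν β) = (2 * π)⁻¹ *
      ∫ x in (-π)..π, Real.exp (-β * uu p G x) / Zp p ν β * F (x : 𝕋) := by
    intro F
    unfold gibbsp
    rw [integral_nu hmeas (fun x => by positivity) F 0]
    congr 1
    apply integral_congr_Ioc
    intro x hx
    rw [zero_add, hU, rep_coe hx]
  refine ⟨fun z => HH p G α β (rep z), (HH_cont hp hG α β).measurable.comp measurable_rep,
    Eventually.of_forall fun z => hb a ha ha1 G hG hper hGB hGH β α hβ hα hsmall (rep z), ?_⟩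
  intro φ hφ hφ2
  rw [hgibbs, hgibbs]
  congr 1
  have hid := ident hp hG hper hGB α β hφ hφ2
  have e : ∀ F : ℝ → ℝ, ∫ x in (-π)..π, Real.exp (-β * uu p G x) / Zp p ν β * F x =
      (Zp p ν β)⁻¹ * ∫ x in (-π)..π, Real.exp (-β * uu p G x) * F x := by
    intro F
    rw [← intervalIntegral.integral_const_mul]
    congr 1; funext x; ring
  have e1 : ∫ x in (-π)..π, Real.exp (-β * uu p G x) / Zp p ν β * genp p ν α β φ (x : 𝕋)
      = ∫ x in (-π)..π, Real.exp (-β * uu p G x) / Zp p ν β *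
        (1 / 2 * deriv (deriv φ) x + α⁻¹ * ((2 * π)⁻¹ *
        ∫ r in (-π)..π, G (x + r) * (φ (x + p / 2 * α * β * kk p r) - φ x))) := by
    apply integral_congr_Ioc
    intro x hx
    unfold genp
    rw [rep_coe hx, hνdef, integral_nu hgc.measurable h0 _ (x : 𝕋)]
    congr 4
    apply integral_congr_Ioc
    intro r hr
    rw [dist_add_coe _ hr, sgn_add_coe _ hr, mul_assoc (p / 2 * α * β), kk_sgn hp]
    simp only [hGdef]
    rw [AddCircle.coe_add]
  have e2 : ∫ x in (-π)..π, Real.exp (-β * uu p G x) / Zp p ν β *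
        (φ (rep (x : 𝕋)) * HH p G α β (rep (x : 𝕋)))
      = ∫ x in (-π)..π, Real.exp (-β * uu p G x) / Zp p ν β * (φ x * HH p G α β x) := by
    apply integral_congr_Ioc
    intro x hx
    rw [rep_coe hx]
  rw [e1, e2, e, e, hid]
end
end

section
/- There exists a universal constant k > 0 with the following property. Let ν be a probability measure on 𝕋, U₂(x) := ∫ d(x,y)² ν(dy), and μ_β the Gibbs measure with density exp(−βU₂)/Z_β with respect to λ. For every s > 0 and β ≥ 1 with βs ≤ 1/2, every y ∈ 𝕋 and every f ∈ C¹(𝕋), setting η := s/(1−s), g_y(z) := f(z)·⟨y−z⟩ and, for x ∈ B(y,(1−s)π), x_η := x + η·⟨x−y⟩, one has ∫_{B(y,(1−s)π)} [ (1−s)^{−1} exp(β(U₂(x) − U₂(x_η))) g_y(x_η) − g_y(x) ]² μ_β(dx) ≤ k s² β² ( ∫_𝕋 (f')² dμ_β + ∫_𝕋 f² dμ_β ). -/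
open MeasureTheory Real Set Filter

noncomputable section

/-- The potential `U₂(x) = ∫ d(x,y)² ν(dy)`. -/
def U2 (ν : Measure 𝕋) (x : 𝕋) : ℝ := ∫ y, dist x y ^ 2 ∂ν

/-- The normalizing constant `Z_β = ∫ exp(-β U₂) dλ`. -/
def Z2 (ν : Measure 𝕋) (β : ℝ) : ℝ := ∫ x, Real.exp (-β * U2 ν x) ∂lam

/-- The Gibbs measure `μ_β` with density `exp(-β U₂)/Z_β` w.r.t. `λ`. -/
def gibbs2 (ν : Measure 𝕋) (β : ℝ) : Measure 𝕋 :=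
  lam.withDensity fun x => ENNReal.ofReal (Real.exp (-β * U2 ν x) / Z2 ν β)


theorem aux_cs (g : ℝ → ℝ) (hg : Continuous g) {a b : ℝ} (hab : a < b) :
    (∫ t in a..b, g t) ^ 2 ≤ (b - a) * ∫ t in a..b, (g t) ^ 2 := by
  set I := ∫ t in a..b, g t with hI
  have hL : 0 < b - a := sub_pos.2 hab
  have h0 : 0 ≤ ∫ t in a..b, (g t - I / (b - a)) ^ 2 :=
    intervalIntegral.integral_nonneg hab.le (fun t _ => sq_nonneg _)
  have h1 : ∫ t in a..b, (g t - I / (b - a)) ^ 2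
      = (∫ t in a..b, (g t) ^ 2) - 2 * (I / (b - a)) * I + (b - a) * (I / (b - a)) ^ 2 := by
    have : ∀ t, (g t - I / (b - a)) ^ 2
        = ((g t) ^ 2 - 2 * (I / (b - a)) * g t) + (I / (b - a)) ^ 2 := fun t => by ring
    simp_rw [this]
    rw [intervalIntegral.integral_add, intervalIntegral.integral_sub,
      intervalIntegral.integral_const_mul, intervalIntegral.integral_const]
    · simp [hI]
    all_goals exact Continuous.intervalIntegrable (by fun_prop) _ _
  rw [h1] at h0
  have h2 : 2 * (I / (b - a)) * I = 2 * (I ^ 2 / (b - a)) := by ring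
  have h3 : (b - a) * (I / (b - a)) ^ 2 = I ^ 2 / (b - a) := by field_simp
  rw [h2, h3] at h0
  have : I ^ 2 / (b - a) ≤ ∫ t in a..b, (g t) ^ 2 := by linarith
  rw [div_le_iff₀ hL] at this
  linarith

theorem aux_scale (G : ℝ → ℝ) (hG : Continuous G) (h0 : ∀ t, 0 ≤ G t) {σ b p : ℝ}
    (hσ : 1 ≤ σ) (hb : 0 ≤ b) (hp : σ * b ≤ p) :
    ∫ t in (-b)..b, G (σ * t) ≤ ∫ t in (-p)..p, G t := by
  rw [intervalIntegral.integral_comp_mul_left _ (by linarith : σ ≠ 0)]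
  have h1 : 0 ≤ σ * b := by positivity
  have h2 : ∫ t in (σ * -b)..(σ * b), G t ≤ ∫ t in (-p)..p, G t := by
    apply intervalIntegral.integral_mono_interval (by linarith) (by linarith) hp
    · exact Eventually.of_forall h0
    · exact hG.intervalIntegrable _ _
  have h3 : 0 ≤ ∫ t in (σ * -b)..(σ * b), G t :=
    intervalIntegral.integral_nonneg (by linarith) (fun t _ => h0 t)
  have h4 : σ⁻¹ ≤ 1 := inv_le_one_of_one_le₀ hσ
  calc _ ≤ 1 * ∫ t in (σ * -b)..(σ * b), G t := mul_le_mul_of_nonneg_right h4 h3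
    _ ≤ _ := by linarith

theorem aux_diff (F : ℝ → ℝ) (hF : ContDiff ℝ 1 F) (W : ℝ → ℝ) (hW : Continuous W)
    (hW0 : ∀ t, 0 ≤ W t) (a b p M : ℝ) (ha : 1 < a) (hb : 0 ≤ b) (hp : a * b = p) (hM : 0 ≤ M)
    (hWM : ∀ t σ, |t| ≤ b → 1 ≤ σ → σ ≤ a → W t ≤ M * W (σ * t)) :
    ∫ t in (-b)..b, (F (a * t) - F t) ^ 2 * W t
      ≤ (a - 1) ^ 2 * b ^ 2 * M * ∫ t in (-p)..p, (deriv F t) ^ 2 * W t := by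
  have hF' : Continuous (deriv F) := hF.continuous_deriv le_rfl
  have hFc : Continuous F := hF.continuous
  have key : ∀ t, F (a * t) - F t = ∫ σ in (1:ℝ)..a, t * deriv F (σ * t) := by
    intro t
    have := intervalIntegral.integral_eq_sub_of_hasDerivAt (a := 1) (b := a)
      (f := fun σ => F (σ * t)) (f' := fun σ => t * deriv F (σ * t)) (fun σ _ => by
        have h1 : HasDerivAt F (deriv F (σ * t)) (σ * t) :=
          (hF.differentiable (by norm_num) _).hasDerivAt
        have h2 : HasDerivAt (fun σ : ℝ => σ * t) (1 * t) σ := (hasDerivAt_id σ).mul_const t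
        have := h1.comp σ h2
        simpa [mul_comm, Function.comp_def] using this)
      (Continuous.intervalIntegrable (by fun_prop) _ _)
    rw [this]; simp
  have hH : Continuous (fun q : ℝ × ℝ => (deriv F (q.2 * q.1)) ^ 2 * W (q.2 * q.1)) := by fun_prop
  have pt : ∀ t ∈ Icc (-b) b, (F (a * t) - F t) ^ 2 * W t
      ≤ ∫ σ in (1:ℝ)..a, (a - 1) * b ^ 2 * M * ((deriv F (σ * t)) ^ 2 * W (σ * t)) := by
    intro t ht
    have htb : |t| ≤ b := abs_le.2 ht
    have ht2 : t ^ 2 ≤ b ^ 2 := sq_le_sq' ht.1 ht.2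
    rw [key]
    have h1 := aux_cs (fun σ => t * deriv F (σ * t)) (by fun_prop) ha
    calc _ ≤ ((a - 1) * ∫ σ in (1:ℝ)..a, (t * deriv F (σ * t)) ^ 2) * W t :=
          mul_le_mul_of_nonneg_right h1 (hW0 t)
      _ = ∫ σ in (1:ℝ)..a, (a - 1) * W t * (t * deriv F (σ * t)) ^ 2 := by
          rw [intervalIntegral.integral_const_mul]; ring
      _ ≤ _ := by
          apply intervalIntegral.integral_mono_on ha.le
          · exact Continuous.intervalIntegrable (by fun_prop) _ _
          · exact Continuous.intervalIntegrable (by fun_prop) _ _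
          intro σ hσ
          have h2 := hWM t σ htb hσ.1 hσ.2
          have h3 : t ^ 2 * W t ≤ b ^ 2 * (M * W (σ * t)) :=
            mul_le_mul ht2 h2 (hW0 _) (by positivity)
          have h4 : 0 ≤ (a - 1) * (deriv F (σ * t)) ^ 2 :=
            mul_nonneg (by linarith) (sq_nonneg _)
          nlinarith [mul_le_mul_of_nonneg_left h3 h4]
  have hcont2 : Continuous (fun t => ∫ σ in (1:ℝ)..a,
      (a - 1) * b ^ 2 * M * ((deriv F (σ * t)) ^ 2 * W (σ * t))) := by
    apply intervalIntegral.continuous_parametric_intervalIntegral_of_continuous'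
    simp only [Function.uncurry_def]
    fun_prop
  calc _ ≤ ∫ t in (-b)..b, ∫ σ in (1:ℝ)..a,
          (a - 1) * b ^ 2 * M * ((deriv F (σ * t)) ^ 2 * W (σ * t)) := by
        apply intervalIntegral.integral_mono_on (by linarith)
        · exact Continuous.intervalIntegrable (by fun_prop) _ _
        · exact hcont2.intervalIntegrable _ _
        · exact pt
    _ = ∫ σ in (1:ℝ)..a, ∫ t in (-b)..b,
          (a - 1) * b ^ 2 * M * ((deriv F (σ * t)) ^ 2 * W (σ * t)) := by
        apply MeasureTheory.intervalIntegral_intervalIntegral_swap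

        apply IntegrableOn.mono_set (t := uIcc (-b) b ×ˢ uIcc 1 a)
        · apply ContinuousOn.integrableOn_compact (isCompact_uIcc.prod isCompact_uIcc)
          apply Continuous.continuousOn
          simp only [Function.uncurry_def]
          fun_prop
        · exact prod_mono uIoc_subset_uIcc uIoc_subset_uIcc
    _ ≤ ∫ σ in (1:ℝ)..a, (a - 1) * b ^ 2 * M * ∫ t in (-p)..p, (deriv F t) ^ 2 * W t := by
        apply intervalIntegral.integral_mono_on ha.le
        · apply Continuous.intervalIntegrable
          apply intervalIntegral.continuous_parametric_intervalIntegral_of_continuous'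
          simp only [Function.uncurry_def]
          fun_prop
        · simp
        intro σ hσ
        rw [intervalIntegral.integral_const_mul]
        apply mul_le_mul_of_nonneg_left _
          (by have : 0 ≤ a - 1 := by linarith
              positivity)
        refine aux_scale (fun t => (deriv F t) ^ 2 * W t) (by fun_prop)
          (fun t => mul_nonneg (sq_nonneg _) (hW0 t)) hσ.1 hb ?_
        rw [← hp]; exact mul_le_mul_of_nonneg_right hσ.2 hb
    _ = _ := by
        rw [intervalIntegral.integral_const, smul_eq_mul]; ring

/-- universal constant -/
noncomputable def auxK : ℝ := 8 * π ^ 2 * exp (π ^ 2) + 6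

noncomputable def auxk : ℝ := 2 * π ^ 2 * exp (π ^ 2) * (4 * π ^ 2 + auxK ^ 2)

theorem auxk_pos : 0 < auxk := by unfold auxk auxK; positivity

theorem aux_exp (u : ℝ) (C : ℝ) (h : |u| ≤ C) : |exp u - 1| ≤ C * exp C := by
  have hC : 0 ≤ C := (abs_nonneg u).trans h
  have h1 := abs_le.1 h
  have e1 : 1 + u ≤ exp u := by linarith [add_one_le_exp u]
  have e2 : 1 ≤ exp C := one_le_exp hC
  have e3 : exp u ≤ exp C := exp_le_exp.2 h1.2
  have e4 : 1 - C ≤ exp (-C) := by linarith [add_one_le_exp (-C)]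
  have e5 : exp C * exp (-C) = 1 := by rw [← exp_add]; simp
  have e6 : exp C - 1 ≤ C * exp C := by nlinarith
  rw [abs_le]; constructor
  · nlinarith
  · linarith

set_option maxHeartbeats 2000000 in
theorem aux_real (F V : ℝ → ℝ) (hF : ContDiff ℝ 1 F) (s β : ℝ) (hs : 0 < s) (hβ : 1 ≤ β)
    (hsβ : β * s ≤ 1 / 2) (hV : ∀ t t', |V t - V t'| ≤ 2 * π * |t - t'|) :
    ∫ t in (-((1 - s) * π))..((1 - s) * π),
      ((1 - s)⁻¹ * exp (β * (V t - V ((1 - s)⁻¹ * t))) *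
        (F ((1 - s)⁻¹ * t) * (-((1 - s)⁻¹ * t))) - F t * (-t)) ^ 2 * exp (-β * V t)
    ≤ auxk * s ^ 2 * β ^ 2 * ((∫ t in (-π)..π, (deriv F t) ^ 2 * exp (-β * V t))
        + ∫ t in (-π)..π, (F t) ^ 2 * exp (-β * V t)) := by
  have hs2 : s ≤ 1 / 2 := by nlinarith
  have h1s : 0 < 1 - s := by linarith
  set a := (1 - s)⁻¹ with ha
  have has : a * (1 - s) = 1 := inv_mul_cancel₀ h1s.ne'
  have ha1 : 1 < a := by rw [ha]; exact (one_lt_inv₀ h1s).2 (by linarith)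
  have ha2 : a ≤ 2 := by nlinarith
  have has2 : a - 1 ≤ 2 * s := by nlinarith
  set b := (1 - s) * π with hb
  have hpi := pi_pos
  have hb0 : 0 ≤ b := by positivity
  have hbπ : b ≤ π := by rw [hb]; nlinarith
  have hab : a * b = π := by rw [hb, ← mul_assoc, has, one_mul]
  have habs : (a - 1) * b = s * π := by rw [sub_mul, hab, hb]; ring
  have hVc : Continuous V := by
    have : LipschitzWith (Real.toNNReal (2 * π)) V := by
      apply LipschitzWith.of_dist_le_mul
      intro x y
      rw [Real.coe_toNNReal _ (by positivity), Real.dist_eq, Real.dist_eq]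
      exact hV x y
    exact this.continuous
  have hFc : Continuous F := hF.continuous
  have hF' : Continuous (deriv F) := hF.continuous_deriv le_rfl
  set M := exp (π ^ 2) with hM
  have hM0 : 0 < M := exp_pos _
  have hβs : 0 ≤ β * s := by positivity
  have hVd : ∀ t σ, |t| ≤ b → 1 ≤ σ → σ ≤ a → |β * (V t - V (σ * t))| ≤ 2 * π ^ 2 * (β * s) := by
    intro t σ ht h1 h2
    rw [abs_mul, abs_of_pos (by linarith : 0 < β)]
    have e : |t - σ * t| ≤ s * π := by
      have : t - σ * t = -((σ - 1) * t) := by ring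
      rw [this, abs_neg, abs_mul, abs_of_nonneg (by linarith : 0 ≤ σ - 1), ← habs]
      exact mul_le_mul (by linarith) ht (abs_nonneg _) (by linarith)
    have e2 := hV t (σ * t)
    have e3 : |V t - V (σ * t)| ≤ 2 * π * (s * π) :=
      e2.trans (mul_le_mul_of_nonneg_left e (by positivity))
    calc _ ≤ β * (2 * π * (s * π)) := mul_le_mul_of_nonneg_left e3 (by linarith)
      _ = _ := by ring
  have hVd' : 2 * π ^ 2 * (β * s) ≤ π ^ 2 := by nlinarith [sq_nonneg π]
  have hWM : ∀ t σ, |t| ≤ b → 1 ≤ σ → σ ≤ a → exp (-β * V t) ≤ M * exp (-β * V (σ * t)) := by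
    intro t σ ht h1 h2
    rw [hM, ← exp_add, exp_le_exp]
    have := (abs_le.1 ((hVd t σ ht h1 h2).trans hVd')).1
    linarith
  have hA := aux_diff F hF (fun t => exp (-β * V t)) (by fun_prop) (fun t => (exp_pos _).le)
    a b π M ha1 hb0 hab hM0.le hWM
  have hB := aux_scale (fun t => (F t) ^ 2 * exp (-β * V t)) (by fun_prop)
    (fun t => by positivity) ha1.le hb0 hab.le
  set P := ∫ t in (-π)..π, (deriv F t) ^ 2 * exp (-β * V t)
  set Q := ∫ t in (-π)..π, (F t) ^ 2 * exp (-β * V t)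
  have hP : 0 ≤ P := intervalIntegral.integral_nonneg (by linarith) (fun t _ => by positivity)
  have hQ : 0 ≤ Q := intervalIntegral.integral_nonneg (by linarith) (fun t _ => by positivity)
  have hK0 : 0 ≤ auxK := by unfold auxK; positivity
  have pt : ∀ t ∈ Icc (-b) b,
      (a * exp (β * (V t - V (a * t))) *
        (F (a * t) * (-(a * t))) - F t * (-t)) ^ 2 * exp (-β * V t)
      ≤ 2 * π ^ 2 * ((F (a * t) - F t) ^ 2 * exp (-β * V t))
        + 2 * π ^ 2 * (auxK * (β * s)) ^ 2 * M * ((F (a * t)) ^ 2 * exp (-β * V (a * t))) := by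
    intro t ht
    have htb : |t| ≤ b := abs_le.2 ht
    have ht2 : t ^ 2 ≤ π ^ 2 := sq_le_sq' (by linarith [ht.1]) (by linarith [ht.2])
    have hu := hVd t a htb ha1.le le_rfl
    have hw := hWM t a htb ha1.le le_rfl
    set u := β * (V t - V (a * t))
    have he := aux_exp u _ hu
    have he2 : |exp u - 1| ≤ 2 * π ^ 2 * (β * s) * M :=
      he.trans (mul_le_mul_of_nonneg_left (exp_le_exp.2 hVd') (by positivity))
    have hc : |a ^ 2 * exp u - 1| ≤ auxK * (β * s) := by
      have e1 : a ^ 2 * exp u - 1 = a ^ 2 * (exp u - 1) + (a ^ 2 - 1) := by ring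
      rw [e1]
      have e2 : |a ^ 2 * (exp u - 1)| ≤ 4 * (2 * π ^ 2 * (β * s) * M) := by
        rw [abs_mul, abs_of_nonneg (sq_nonneg a)]
        exact mul_le_mul (by nlinarith) he2 (abs_nonneg _) (by norm_num)
      have e3 : |a ^ 2 - 1| ≤ 6 * (β * s) := by
        rw [abs_of_nonneg (by nlinarith)]
        nlinarith
      calc _ ≤ _ := abs_add_le _ _
        _ ≤ _ := add_le_add e2 e3
        _ = _ := by unfold auxK; rw [hM]; ring
    have hc2 : (a ^ 2 * exp u - 1) ^ 2 ≤ (auxK * (β * s)) ^ 2 := sq_le_sq' (by linarith [(abs_le.1 hc).1]) (abs_le.1 hc).2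
    have e1 : (a * exp u * (F (a * t) * (-(a * t))) - F t * (-t)) ^ 2
        = t ^ 2 * ((F (a * t) - F t) + (a ^ 2 * exp u - 1) * F (a * t)) ^ 2 := by ring
    rw [e1]
    have e2 : ((F (a * t) - F t) + (a ^ 2 * exp u - 1) * F (a * t)) ^ 2
        ≤ 2 * (F (a * t) - F t) ^ 2 + 2 * ((auxK * (β * s)) ^ 2 * F (a * t) ^ 2) := by
      have := mul_le_mul_of_nonneg_right hc2 (sq_nonneg (F (a * t)))
      nlinarith [sq_nonneg ((F (a * t) - F t) - (a ^ 2 * exp u - 1) * F (a * t))]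
    have e3 : t ^ 2 * ((F (a * t) - F t) + (a ^ 2 * exp u - 1) * F (a * t)) ^ 2
        ≤ π ^ 2 * (2 * (F (a * t) - F t) ^ 2 + 2 * ((auxK * (β * s)) ^ 2 * F (a * t) ^ 2)) :=
      mul_le_mul ht2 e2 (sq_nonneg _) (by positivity)
    calc _ ≤ _ := mul_le_mul_of_nonneg_right e3 (exp_pos _).le
      _ = 2 * π ^ 2 * ((F (a * t) - F t) ^ 2 * exp (-β * V t))
        + 2 * π ^ 2 * (auxK * (β * s)) ^ 2 * (F (a * t)) ^ 2 * exp (-β * V t) := by ring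
      _ ≤ 2 * π ^ 2 * ((F (a * t) - F t) ^ 2 * exp (-β * V t))
        + 2 * π ^ 2 * (auxK * (β * s)) ^ 2 * (F (a * t)) ^ 2 * (M * exp (-β * V (a * t))) := by
          gcongr
      _ = _ := by ring
  calc _ ≤ ∫ t in (-b)..b, (2 * π ^ 2 * ((F (a * t) - F t) ^ 2 * exp (-β * V t))
        + 2 * π ^ 2 * (auxK * (β * s)) ^ 2 * M * ((F (a * t)) ^ 2 * exp (-β * V (a * t)))) := by
        apply intervalIntegral.integral_mono_on (by linarith)
        · exact Continuous.intervalIntegrable (by fun_prop) _ _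
        · exact Continuous.intervalIntegrable (by fun_prop) _ _
        · exact pt
    _ = 2 * π ^ 2 * (∫ t in (-b)..b, (F (a * t) - F t) ^ 2 * exp (-β * V t))
        + 2 * π ^ 2 * (auxK * (β * s)) ^ 2 * M *
          ∫ t in (-b)..b, (F (a * t)) ^ 2 * exp (-β * V (a * t)) := by
        rw [intervalIntegral.integral_add, intervalIntegral.integral_const_mul,
          intervalIntegral.integral_const_mul]
        all_goals exact Continuous.intervalIntegrable (by fun_prop) _ _
    _ ≤ 2 * π ^ 2 * ((a - 1) ^ 2 * b ^ 2 * M * P)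
        + 2 * π ^ 2 * (auxK * (β * s)) ^ 2 * M * Q := by gcongr
    _ ≤ 2 * π ^ 2 * ((2 * (β * s)) ^ 2 * π ^ 2 * M * P)
        + 2 * π ^ 2 * (auxK * (β * s)) ^ 2 * M * Q := by
        have : a - 1 ≤ 2 * (β * s) := by nlinarith
        have h0 : 0 ≤ a - 1 := by linarith
        gcongr
    _ ≤ _ := by
        have h1 : 0 ≤ 2 * π ^ 2 * (auxK * (β * s)) ^ 2 * M * P := by positivity
        have h2 : 0 ≤ 2 * π ^ 2 * ((2 * (β * s)) ^ 2 * π ^ 2 * M * Q) := by positivity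
        unfold auxk
        rw [← hM]
        linarith

theorem rep_coe_s11 {t : ℝ} (h1 : -π < t) (h2 : t ≤ π) : rep (t : 𝕋) = t := by
  unfold rep
  exact AddCircle.equivIoc_coe_of_mem ⟨h1, by linarith⟩

theorem dist_le_pi (x y : 𝕋) : dist x y ≤ π := by
  rw [dist_eq_norm]
  have := AddCircle.norm_le_half_period (2 * π) (x := x - y) (by positivity)
  rw [abs_of_pos (by positivity)] at this
  linarith

theorem U2_lip (ν : Measure 𝕋) [IsProbabilityMeasure ν] (x x' : 𝕋) :
    |U2 ν x - U2 ν x'| ≤ 2 * π * dist x x' := by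
  have hi : ∀ x : 𝕋, Integrable (fun y => dist x y ^ 2) ν := fun x =>
    Integrable.of_bound (by fun_prop) (π ^ 2) (Eventually.of_forall fun y => by
      rw [Real.norm_of_nonneg (by positivity)]
      exact pow_le_pow_left₀ dist_nonneg (dist_le_pi _ _) 2)
  unfold U2
  rw [← integral_sub (hi x) (hi x')]
  have := norm_integral_le_of_norm_le_const (μ := ν)
    (f := fun y => dist x y ^ 2 - dist x' y ^ 2) (C := 2 * π * dist x x')
    (Eventually.of_forall fun y => by
      have h1 := dist_le_pi x y
      have h2 := dist_le_pi x' y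
      have h3 : |dist x y - dist x' y| ≤ dist x x' := abs_dist_sub_le x x' y
      have e : dist x y ^ 2 - dist x' y ^ 2
        = (dist x y + dist x' y) * (dist x y - dist x' y) := by ring
      rw [e, Real.norm_eq_abs, abs_mul, abs_of_nonneg (by positivity)]
      exact mul_le_mul (by linarith) h3 (abs_nonneg _) (by positivity))
  simpa using this

theorem U2_cont (ν : Measure 𝕋) [IsProbabilityMeasure ν] : Continuous (U2 ν) := by
  have : LipschitzWith (Real.toNNReal (2 * π)) (U2 ν) := by
    apply LipschitzWith.of_dist_le_mul
    intro x y
    rw [Real.coe_toNNReal _ (by positivity), Real.dist_eq]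
    exact U2_lip ν x y
  exact this.continuous

theorem norm_coe_le' (t : ℝ) : ‖(t : 𝕋)‖ ≤ |t| := by
  simpa using (QuotientAddGroup.norm_mk_le_norm (S := AddSubgroup.zmultiples (2 * π)) (m := t))

theorem gibbs_int (ν : Measure 𝕋) [IsProbabilityMeasure ν] (β : ℝ) (y : 𝕋) (G : 𝕋 → ℝ) :
    ∫ x, G x ∂(gibbs2 ν β) = ((2 * π)⁻¹ * (Z2 ν β)⁻¹) *
      ∫ t in (-π)..π, G (y + (t : 𝕋)) * exp (-β * U2 ν (y + (t : 𝕋))) := by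
  have hc := U2_cont ν
  have hZ : 0 ≤ Z2 ν β := integral_nonneg fun x => (exp_pos _).le
  unfold gibbs2
  rw [integral_withDensity_eq_integral_toReal_smul
    (Measurable.ennreal_ofReal (Continuous.measurable (by fun_prop)))
    (Eventually.of_forall fun x => ENNReal.ofReal_lt_top)]
  unfold lam
  rw [integral_smul_measure, ← integral_add_left_eq_self _ y,
    ← AddCircle.intervalIntegral_preimage (2 * π) (-π)]
  have e : -π + 2 * π = π := by ring
  rw [e, smul_eq_mul, mul_assoc, ENNReal.toReal_inv, ENNReal.toReal_ofReal (by positivity)]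
  congr 1
  rw [← intervalIntegral.integral_const_mul]
  congr 1
  ext t
  rw [ENNReal.toReal_ofReal (by positivity), smul_eq_mul]
  ring

/-- Lemma `Tstarpa0`: there is a universal constant `k > 0` such that for any
probability measure `ν` on the circle, any `s > 0`, `β ≥ 1` with `βs ≤ 1/2`, any `y` and any
`C¹` function `f` on the circle, setting `η = s/(1-s)`, `g_y(z) = f(z)⟨y-z⟩` and
`x_η = x + η⟨x-y⟩`,
`∫_{B(y,(1-s)π)} ((1-s)⁻¹ e^{β(U₂(x)-U₂(x_η))} g_y(x_η) - g_y(x))² dμ_β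
   ≤ k s² β² (∫ (f')² dμ_β + ∫ f² dμ_β)`. -/
theorem adjoint_operator_L2_estimate_p_two :
    ∃ k : ℝ, 0 < k ∧
      ∀ (ν : Measure 𝕋), IsProbabilityMeasure ν →
      ∀ (s β : ℝ), 0 < s → 1 ≤ β → β * s ≤ 1 / 2 →
      ∀ (y : 𝕋) (f : ℝ → ℝ), Function.Periodic f (2 * π) → ContDiff ℝ 1 f →
      ∀ (xe : 𝕋 → 𝕋), (∀ x, xe x = x + ((s / (1 - s) * rep (x - y) : ℝ) : 𝕋)) →
      ∀ (gy : 𝕋 → ℝ), (∀ z, gy z = f (rep z) * rep (y - z)) →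
        (∫ x in Metric.ball y ((1 - s) * π),
            ((1 - s)⁻¹ * Real.exp (β * (U2 ν x - U2 ν (xe x))) * gy (xe x) - gy x) ^ 2
              ∂(gibbs2 ν β))
          ≤ k * s ^ 2 * β ^ 2 *
              ((∫ x, (deriv f (rep x)) ^ 2 ∂(gibbs2 ν β))
                + ∫ x, (f (rep x)) ^ 2 ∂(gibbs2 ν β)) := by
  refine ⟨auxk, auxk_pos, ?_⟩
  intro ν hν s β hs hβ hsβ y f hper hf xe hxe gy hgy
  have hpi := pi_pos
  have hs2 : s ≤ 1 / 2 := by nlinarith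
  have h1s : 0 < 1 - s := by linarith
  set b := (1 - s) * π with hb
  have hb0 : 0 ≤ b := by positivity
  have hbπ : b < π := by rw [hb]; nlinarith
  set F : ℝ → ℝ := fun t => f (rep y + t) with hFdef
  set V : ℝ → ℝ := fun t => U2 ν (y + (t : 𝕋)) with hVdef
  have hF : ContDiff ℝ 1 F := hf.comp (contDiff_const.add contDiff_id)
  have hV : ∀ t t', |V t - V t'| ≤ 2 * π * |t - t'| := by
    intro t t'
    refine (U2_lip ν _ _).trans (mul_le_mul_of_nonneg_left ?_ (by positivity))
    rw [dist_add_left, dist_eq_norm, ← AddCircle.coe_sub]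
    exact norm_coe_le' _
  have hlift : ∀ (g : ℝ → ℝ), Function.Periodic g (2 * π) → ∀ t : ℝ,
      g (rep (y + (t : 𝕋))) = g (rep y + t) := by
    intro g hg t
    have h1 : ((rep (y + (t : 𝕋)) : ℝ) : 𝕋) = ((rep y + t : ℝ) : 𝕋) := by
      rw [coe_rep, AddCircle.coe_add, coe_rep]
    have h2 := congrArg hg.lift h1
    rwa [Function.Periodic.lift_coe, Function.Periodic.lift_coe] at h2
  have hper' : Function.Periodic (deriv f) (2 * π) := by
    intro x
    have h1 : (fun x => f (x + 2 * π)) = f := funext hper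
    rw [← deriv_comp_add_const, h1]
  have hderiv : ∀ t, deriv F t = deriv f (rep y + t) := by
    intro t
    simp only [hFdef]
    rw [deriv_comp_const_add]
  have hC : 0 ≤ (2 * π)⁻¹ * (Z2 ν β)⁻¹ := by
    have hZ : 0 ≤ Z2 ν β := integral_nonneg fun x => (exp_pos _).le
    positivity
  have hr := aux_real F V hF s β hs hβ hsβ hV
  rw [← integral_indicator Metric.isOpen_ball.measurableSet, gibbs_int ν β y, gibbs_int ν β y,
    gibbs_int ν β y, ← mul_add]
  have e1 : ∀ t : ℝ, (deriv f (rep (y + (t : 𝕋)))) ^ 2 = (deriv F t) ^ 2 := fun t => by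
    rw [hlift _ hper', hderiv]
  have e2 : ∀ t : ℝ, (f (rep (y + (t : 𝕋)))) ^ 2 = (F t) ^ 2 := fun t => by
    rw [hlift _ hper]
  simp_rw [e1, e2]
  have hg : ∀ t : ℝ, |t| < π → gy (y + (t : 𝕋)) = F t * (-t) := by
    intro t ht
    have ht' := abs_lt.1 ht
    rw [hgy, hlift _ hper]
    have : y - (y + (t : 𝕋)) = ((-t : ℝ) : 𝕋) := by
      rw [AddCircle.coe_neg]; abel
    rw [this, rep_coe_s11 (by linarith) (by linarith)]
  have hx : ∀ t : ℝ, |t| < π → xe (y + (t : 𝕋)) = y + (((1 - s)⁻¹ * t : ℝ) : 𝕋) := by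
    intro t ht
    have ht' := abs_lt.1 ht
    rw [hxe, add_sub_cancel_left, rep_coe_s11 (by linarith) (by linarith), add_assoc,
      ← AddCircle.coe_add]
    congr 2
    field_simp
    ring
  have main : ∫ t in (-π)..π, (Metric.ball y b).indicator (fun x =>
        ((1 - s)⁻¹ * exp (β * (U2 ν x - U2 ν (xe x))) * gy (xe x) - gy x) ^ 2) (y + (t : 𝕋))
          * exp (-β * U2 ν (y + (t : 𝕋)))
      = ∫ t in (-b)..b,
      ((1 - s)⁻¹ * exp (β * (V t - V ((1 - s)⁻¹ * t))) *
        (F ((1 - s)⁻¹ * t) * (-((1 - s)⁻¹ * t))) - F t * (-t)) ^ 2 * exp (-β * V t) := by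
    rw [intervalIntegral.integral_of_le (by linarith), intervalIntegral.integral_of_le (by linarith),
      integral_Ioc_eq_integral_Ioo (x := -b)]
    have hsub : Ioo (-b) b = Ioc (-π) π ∩ Ioo (-b) b := by
      ext t
      simp only [mem_inter_iff, mem_Ioo, mem_Ioc]
      constructor
      · rintro ⟨h1, h2⟩
        exact ⟨⟨by linarith, by linarith⟩, h1, h2⟩
      · exact fun h => h.2
    rw [hsub, ← setIntegral_indicator measurableSet_Ioo]
    apply setIntegral_congr_fun measurableSet_Ioc
    intro t ht
    have hnorm : ‖(t : 𝕋)‖ = |t| := by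
      rw [AddCircle.norm_coe_eq_abs_iff _ (by positivity), abs_of_pos (by positivity : 0 < 2 * π)]
      have := abs_le.2 ⟨ht.1.le, ht.2⟩
      linarith
    have hmem : y + (t : 𝕋) ∈ Metric.ball y b ↔ t ∈ Ioo (-b) b := by
      rw [Metric.mem_ball, dist_eq_norm, add_sub_cancel_left, hnorm, abs_lt, mem_Ioo]
    by_cases h : t ∈ Ioo (-b) b
    · have htb : |t| < b := abs_lt.2 h
      have htπ : |t| < π := htb.trans hbπ
      have hat : |(1 - s)⁻¹ * t| < π := by
        rw [abs_mul, abs_of_pos (inv_pos.2 h1s), inv_mul_lt_iff₀ h1s]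
        exact htb
      simp only [indicator_of_mem (hmem.2 h), indicator_of_mem h]
      rw [hx t htπ, hg t htπ, hg _ hat]
    · simp only [indicator_of_notMem (fun h' => h (hmem.1 h')), indicator_of_notMem h, zero_mul]
  rw [main]
  calc _ ≤ _ := mul_le_mul_of_nonneg_left hr hC
    _ = _ := by ring
end
end
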